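/- arXiv:1804.09449 — 3 statements merged into one kernel-verified Lean document; each statement's English description precedes it below -/
import Mathlib

section
/- Let G be a finite simple cubic graph containing the graph K as a subgraph, i.e., there exist five pairwise distinct vertices v1, v2, v3, v4, v5 of G such that v1v2, v1v3, v2v4, v2v5, v3v4, v3v5, v4v5 are all edges of G. Then χ'_N(G) = 7: G admits a normal 7-edge-coloring, but admits no normal edge-coloring with at most 6 colors. -/
open SimpleGraph

/-- A proper edge-coloring: distinct edges of `G` sharing an endpoint get different colors. -/
def IsProperEdgeColoring {V C : Type*} (G : SimpleGraph V) (c : Sym2 V → C) : Prop :=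
  ∀ e ∈ G.edgeSet, ∀ f ∈ G.edgeSet, e ≠ f → (∃ v : V, v ∈ e ∧ v ∈ f) → c e ≠ c f

/-- `S_c(v)`: the set of colors appearing on edges incident to `v`. -/
def colorSet {V C : Type*} (G : SimpleGraph V) (c : Sym2 V → C) (v : V) : Set C :=
  c '' G.incidenceSet v

/-- The edge `uv` is poor: exactly 3 colors appear around its endpoints. -/
def IsPoorAt {V C : Type*} (G : SimpleGraph V) (c : Sym2 V → C) (u v : V) : Prop :=
  (colorSet G c u ∪ colorSet G c v).ncard = 3

/-- The edge `uv` is rich: exactly 5 colors appear around its endpoints. -/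
def IsRichAt {V C : Type*} (G : SimpleGraph V) (c : Sym2 V → C) (u v : V) : Prop :=
  (colorSet G c u ∪ colorSet G c v).ncard = 5

/-- A normal edge-coloring: a proper edge-coloring in which every edge is poor or rich. -/
def IsNormalEdgeColoring {V C : Type*} (G : SimpleGraph V) (c : Sym2 V → C) : Prop :=
  IsProperEdgeColoring G c ∧
    ∀ u v : V, G.Adj u v → IsPoorAt G c u v ∨ IsRichAt G c u v

/-- A nowhere-zero flow with values in an additive group `M` (all elements self-inverse in our
applications): nonzero on every edge, and at every vertex the values on incident edges sum to 0. -/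
def IsNowhereZeroFlow {V M : Type*} [AddCommMonoid M] (G : SimpleGraph V)
    (θ : Sym2 V → M) : Prop :=
  (∀ e ∈ G.edgeSet, θ e ≠ 0) ∧ ∀ v : V, ∑ᶠ e ∈ G.incidenceSet v, θ e = 0

/-- `G` is `k`-edge-connected: connected, and still connected after deleting any set of
fewer than `k` edges. -/
def EdgeConnGe {V : Type*} (G : SimpleGraph V) (k : ℕ) : Prop :=
  G.Connected ∧ ∀ s : Set (Sym2 V), s.ncard < k → (G.deleteEdges s).Connected

/-- `G` is cubic: every vertex has degree 3. -/
def IsCubic {V : Type*} (G : SimpleGraph V) : Prop :=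
  ∀ v : V, (G.neighborSet v).ncard = 3

/-- `G` is bridgeless: no edge is a bridge. -/
def Bridgeless {V : Type*} (G : SimpleGraph V) : Prop :=
  ∀ e ∈ G.edgeSet, ¬ G.IsBridge e

/-!
The seven colours are the nonzero elements of `𝔽₂³`, that is, the points of the Fano plane. If a
colouring satisfies Kirchhoff's law at a vertex of degree three, then the colours there form a line.
Two lines are equal or meet in one point, so an edge is poor or rich as soon as the law holds at
both of its ends: a nowhere-zero `𝔽₂³`-flow of a cubic graph is a normal colouring.

Such a flow exists on every region `X` of the graph none of whose subsets is left by exactly one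
edge. After contracting across cuts with at most two edges, all cuts may be assumed to have at least
three, and `X` is then exhausted by connected Eulerian subgraphs: each of them carries the first
coordinate of the flow, and the remaining two coordinates, which need not be nonzero there, are
adjusted along it so that the flow is conserved.

An arbitrary region is split along a single edge whenever possible, and the two colourings are glued
by permuting the colours on one side. A region that cannot be split carries a flow, unless it is
itself left by exactly one edge. In that case a minimal set `S` left by two edges is coloured
separately, by a flow that is broken at one end of the cut, and glued to a flow on the rest.

For the lower bound, if an edge `uv` of a normally coloured cubic graph has a colour at `u` in
common with one at `v` besides its own, then it is poor. Applied to the edges of `K`, this shows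
that the seven edges of `K` have different colours.
-/

namespace NormalColoring

open Finset

section Lines

/-- The seven colours: the nonzero elements of `𝔽₂³`, that is, the points of the Fano plane. -/
abbrev Color := {a : ZMod 2 × (ZMod 2 × ZMod 2) // a ≠ 0}

/-- The lines of the Fano plane, as sets of colours. -/
def IsLine (L : Finset Color) : Prop := #L = 3 ∧ ∑ a ∈ L, a.1 = 0

variable {L L' : Finset Color} {a b : Color}

theorem card_color : Fintype.card Color = 7 := by decide

theorem eq_add_of_add_add_eq_zero {a b c : ZMod 2 × (ZMod 2 × ZMod 2)} (h : a + (b + c) = 0) :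
    c = a + b := by
  rw [← add_assoc, add_eq_zero_iff_eq_neg] at h
  rw [h, ZModModule.neg_eq_self]

theorem IsLine.exists_eq (hL : IsLine L) (ha : a ∈ L) (hb : b ∈ L) (hab : a ≠ b) :
    ∃ c : Color, c.1 = a.1 + b.1 ∧ L = {a, b, c} := by
  have hb' : b ∈ L.erase a := mem_erase.2 ⟨hab.symm, hb⟩
  obtain ⟨c, hc⟩ : ∃ c, (L.erase a).erase b = {c} := by
    rw [← card_eq_one, card_erase_of_mem hb', card_erase_of_mem ha, hL.1]
  have hsum := hL.2
  rw [← add_sum_erase L _ ha, ← add_sum_erase _ _ hb', hc, sum_singleton] at hsum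
  exact ⟨c, eq_add_of_add_add_eq_zero hsum, by rw [← hc, insert_erase hb', insert_erase ha]⟩

theorem IsLine.eq_of_mem (hL : IsLine L) (hL' : IsLine L') (hab : a ≠ b) (ha : a ∈ L)
    (hb : b ∈ L) (ha' : a ∈ L') (hb' : b ∈ L') : L = L' := by
  obtain ⟨c, hc, rfl⟩ := hL.exists_eq ha hb hab
  obtain ⟨c', hc', rfl⟩ := hL'.exists_eq ha' hb' hab
  rw [Subtype.ext (hc.trans hc'.symm)]

/-- A subgroup of order four of `𝔽₂³` has index two. -/
theorem mem_or_mem_or_add_mem : ∀ a b : ZMod 2 × (ZMod 2 × ZMod 2), a ≠ 0 ∧ b ≠ 0 ∧ a ≠ b →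
    ∀ x y, x ∈ ({0, a, b, a + b} : Finset _) ∨ y ∈ ({0, a, b, a + b} : Finset _) ∨
      x + y ∈ ({0, a, b, a + b} : Finset _) := by
  decide +kernel

theorem IsLine.inter_nonempty (hL : IsLine L) (hL' : IsLine L') : (L ∩ L').Nonempty := by
  obtain ⟨a, ha, b, hb, hab⟩ := one_lt_card.1 (hL.1 ▸ by norm_num : 1 < #L)
  obtain ⟨c, hc, rfl⟩ := hL.exists_eq ha hb hab
  obtain ⟨x, hx, y, hy, hxy⟩ := one_lt_card.1 (hL'.1 ▸ by norm_num : 1 < #L')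
  obtain ⟨z, hz, rfl⟩ := hL'.exists_eq hx hy hxy
  have mem_iff (w : Color) :
      w.1 ∈ ({0, a.1, b.1, a.1 + b.1} : Finset _) ↔ w ∈ ({a, b, c} : Finset Color) := by
    simp only [← hc, mem_insert, mem_singleton, w.2, false_or, Subtype.ext_iff]
  have h := mem_or_mem_or_add_mem a.1 b.1 ⟨a.2, b.2, Subtype.coe_injective.ne hab⟩ x.1 y.1
  rw [← hz] at h
  simp only [mem_iff] at h
  rcases h with h | h | h
  · exact ⟨x, mem_inter.2 ⟨h, hx⟩⟩
  · exact ⟨y, mem_inter.2 ⟨h, hy⟩⟩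
  · exact ⟨z, mem_inter.2 ⟨h, by simp⟩⟩

theorem IsLine.card_union_le (hL : IsLine L) (hL' : IsLine L') : #(L ∪ L') ≤ 5 := by
  have := card_union_add_card_inter L L'
  have := (hL.inter_nonempty hL').card_pos
  have := hL.1
  have := hL'.1
  omega

theorem IsLine.exists_notMem_insert_union (hL : IsLine L) (hL' : IsLine L') (k : Color) :
    ∃ d, d ∉ insert k (L ∪ L') := by
  by_contra! hall
  have hcard := card_insert_le k (L ∪ L')
  rw [eq_univ_of_forall hall, card_univ, card_color] at hcard
  have := hL.card_union_le hL'
  omega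

theorem injOn_and_isLine_image {ι : Type*} {s : Finset ι} {θ : ι → Color} (hs : #s = 3)
    (h0 : ∑ i ∈ s, (θ i).1 = 0) : Set.InjOn θ s ∧ IsLine (s.image θ) := by
  classical
  have hinj : Set.InjOn θ s := by
    intro i hi j hj hij
    by_contra hne
    have hj' : j ∈ s.erase i := mem_erase.2 ⟨Ne.symm hne, hj⟩
    obtain ⟨k, hk⟩ : ∃ k, (s.erase i).erase j = {k} := by
      rw [← card_eq_one, card_erase_of_mem hj', card_erase_of_mem hi, hs]
    rw [← add_sum_erase s _ hi, ← add_sum_erase _ _ hj', hk, sum_singleton, hij, ← add_assoc,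
      ZModModule.add_self, zero_add] at h0
    exact (θ k).2 h0
  exact ⟨hinj, (card_image_of_injOn hinj).trans hs, (sum_image hinj).trans h0⟩

end Lines

section Compatible

variable {C : Type*} [DecidableEq C] {A B : Finset C} {k : C}

/-- `A` and `B` can be the colour sets of the two ends of an edge coloured `k`, the edge being
poor in the first case and rich in the second. -/
def Compatible (A B : Finset C) (k : C) : Prop := A = B ∨ A ∩ B = {k}

theorem Compatible.symm (h : Compatible A B k) : Compatible B A k :=
  h.imp Eq.symm fun h => inter_comm A B ▸ h

theorem Compatible.image {D : Type*} [DecidableEq D] (h : Compatible A B k) {σ : C → D}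
    (hσ : σ.Injective) : Compatible (A.image σ) (B.image σ) (σ k) :=
  h.imp (congrArg _) fun h => by rw [← image_inter _ _ hσ, h, image_singleton]

theorem compatible_iff_erase (hA : k ∈ A) (hB : k ∈ B) :
    Compatible A B k ↔ A.erase k = B.erase k ∨ Disjoint (A.erase k) (B.erase k) := by
  refine or_congr ((erase_injOn' k).eq_iff hA hB).symm ?_
  simp only [eq_singleton_iff_unique_mem, Finset.disjoint_left, mem_inter, mem_erase]
  exact ⟨fun h a ha hb => ha.1 (h.2 a ⟨ha.2, hb.2⟩), fun h => ⟨⟨hA, hB⟩, fun a ha =>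
    by_contra fun hak => h ⟨hak, ha.1⟩ ⟨hak, ha.2⟩⟩⟩

theorem IsLine.compatible {L L' : Finset Color} {k : Color} (hL : IsLine L) (hL' : IsLine L')
    (hk : k ∈ L) (hk' : k ∈ L') : Compatible L L' k := by
  refine or_iff_not_imp_left.2 fun hne => eq_singleton_iff_unique_mem.2
    ⟨mem_inter.2 ⟨hk, hk'⟩, fun a ha => ?_⟩
  rw [mem_inter] at ha
  by_contra hak
  exact hne (hL.eq_of_mem hL' hak ha.1 hk ha.2 hk')

end Compatible

section Permutations

variable {C : Type*}

theorem exists_perm_map_eq {l l' : List C} (hl : l.Nodup) (hl' : l'.Nodup)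
    (hlen : l.length = l'.length) : ∃ σ : Equiv.Perm C, l.map σ = l' := by
  have := Equiv.Perm.isMultiplyPretransitive C l.length
  obtain ⟨σ, hσ⟩ := MulAction.exists_smul_eq (Equiv.Perm C)
    (⟨l.get, List.nodup_iff_injective_get.1 hl⟩ : Fin l.length ↪ C)
    ⟨l'.get ∘ Fin.cast hlen, (List.nodup_iff_injective_get.1 hl').comp (Fin.cast_injective hlen)⟩
  refine ⟨σ, List.ext_getElem (by simpa using hlen) fun i hi hi' => ?_⟩
  simpa using DFunLike.congr_fun hσ ⟨i, by simpa using hi⟩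

variable {A B P R O : Finset C} {c d α β : C}

theorem exists_card_eq_disjoint [Fintype C] {n : ℕ} (hn : #A + n ≤ Fintype.card C) :
    ∃ O : Finset C, #O = n ∧ Disjoint O A := by
  classical
  have hcompl : n ≤ #Aᶜ := by rw [card_compl]; omega
  obtain ⟨O, hO, hcard⟩ := exists_subset_card_eq hcompl
  exact ⟨O, hcard, disjoint_compl_left.mono_left hO⟩

theorem exists_pair_eq_or_disjoint [Fintype C] (hC : 7 ≤ Fintype.card C) (hA : #A = 2) (hO : #O = 2)
    (hαβ : α ≠ β) (hαA : α ∉ A) (hβO : β ∉ O) (hAO : Disjoint A O) (p : Prop) :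
    ∃ A' : Finset C, #A' = 2 ∧ α ∉ A' ∧ Disjoint A' O ∧ (p ↔ β ∈ A') ∧
      (A' = A ∨ Disjoint A' A) := by
  classical
  by_cases hpβ : p ↔ β ∈ A
  · exact ⟨A, hA, hαA, hAO, hpβ, Or.inl rfl⟩
  have hcard : #(insert α (A ∪ O)) ≤ 5 := by
    have := card_insert_le α (A ∪ O)
    have := card_union_le A O
    omega
  by_cases hp : p
  · obtain ⟨W, hW, hdisj⟩ := exists_card_eq_disjoint (n := 1)
      (A := insert β (insert α (A ∪ O))) (by have := card_insert_le β (insert α (A ∪ O)); omega)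
    obtain ⟨w, rfl⟩ := card_eq_one.1 hW
    refine ⟨{β, w}, card_pair ?_, ?_, ?_, by simp [hp], Or.inr ?_⟩ <;> grind [Finset.disjoint_left]
  · obtain ⟨W, hW, hdisj⟩ := exists_card_eq_disjoint (n := 2) (A := insert α (A ∪ O)) (by omega)
    refine ⟨W, hW, ?_, ?_, ?_, Or.inr ?_⟩ <;> grind [Finset.disjoint_left]

variable [DecidableEq C]

theorem exists_perm_image_eq_of_mem {a b : C} (hcard : #A = #B) (ha : a ∈ A) (hb : b ∈ B) :
    ∃ σ : Equiv.Perm C, σ a = b ∧ A.image σ = B := by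
  obtain ⟨σ, hσ⟩ := exists_perm_map_eq (l := a :: (A.erase a).toList)
    (l' := b :: (B.erase b).toList)    (by simp [nodup_toList]) (by simp [nodup_toList])
    (by simp [card_erase_of_mem ha, card_erase_of_mem hb, hcard])
  refine ⟨σ, (List.cons.inj hσ).1, ?_⟩
  ext z
  have hmem : z ∈ (a :: (A.erase a).toList).map σ ↔ z ∈ b :: (B.erase b).toList := by rw [hσ]
  rwa [List.mem_map, List.mem_cons, mem_toList, ← mem_insert, insert_erase hb,
    exists_congr fun w => and_congr_left' <| by
      rw [List.mem_cons, mem_toList, ← mem_insert, insert_erase ha], ← mem_image] at hmem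

theorem exists_perm_image_eq_pair (hcd : c ≠ d) (hαβ : α ≠ β) (hR : #R = 2) (hO : #O = 2)
    (hcR : c ∉ R) (hdR : d ∉ R) (hαO : α ∉ O) (hβO : β ∉ O) :
    ∃ σ : Equiv.Perm C, σ c = α ∧ σ d = β ∧ R.image σ = O := by
  obtain ⟨r, r', hr, rfl⟩ := card_eq_two.1 hR
  obtain ⟨o, o', ho, rfl⟩ := card_eq_two.1 hO
  obtain ⟨σ, hσ⟩ := exists_perm_map_eq (l := [c, d, r, r']) (l' := [α, β, o, o'])
    (by simp_all) (by simp_all) rfl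
  simp only [List.map_cons, List.map_nil, List.cons.injEq] at hσ
  exact ⟨σ, hσ.1, hσ.2.1, by simp [hσ]⟩

theorem exists_perm_image_eq_pairs (hcd : c ≠ d) (hαβ : α ≠ β) (hP : #P = 2) (hR : #R = 2)
    (hA : #A = 2) (hO : #O = 2) (hcP : c ∉ P) (hcR : c ∉ R) (hdR : d ∉ R) (hPR : Disjoint P R)
    (hαA : α ∉ A) (hαO : α ∉ O) (hβO : β ∉ O) (hAO : Disjoint A O) (hdβ : d ∈ P ↔ β ∈ A) :
    ∃ σ : Equiv.Perm C, σ c = α ∧ σ d = β ∧ P.image σ = A ∧ R.image σ = O := by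
  obtain ⟨r, r', hr, rfl⟩ := card_eq_two.1 hR
  obtain ⟨o, o', ho, rfl⟩ := card_eq_two.1 hO
  by_cases hd : d ∈ P
  · obtain ⟨p, hp⟩ := card_eq_one.1 (by rw [card_erase_of_mem hd, hP] : #(P.erase d) = 1)
    obtain ⟨a, ha⟩ := card_eq_one.1 (by rw [card_erase_of_mem (hdβ.1 hd), hA] : #(A.erase β) = 1)
    rw [← insert_erase hd, hp] at hcP hPR ⊢
    rw [← insert_erase (hdβ.1 hd), ha] at hαA hAO ⊢
    have hpd : p ≠ d := ne_of_mem_erase (hp ▸ mem_singleton_self p)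
    have haβ : a ≠ β := ne_of_mem_erase (ha ▸ mem_singleton_self a)
    obtain ⟨σ, hσ⟩ := exists_perm_map_eq (l := [c, d, p, r, r']) (l' := [α, β, a, o, o'])
      (by grind) (by grind) rfl
    simp only [List.map_cons, List.map_nil, List.cons.injEq] at hσ
    exact ⟨σ, hσ.1, hσ.2.1, by simp [hσ], by simp [hσ]⟩
  · have hβ := mt hdβ.2 hd
    obtain ⟨p, p', hp, rfl⟩ := card_eq_two.1 hP
    obtain ⟨a, a', ha, rfl⟩ := card_eq_two.1 hA
    obtain ⟨σ, hσ⟩ := exists_perm_map_eq (l := [c, d, p, p', r, r']) (l' := [α, β, a, a', o, o'])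
      (by grind) (by grind) rfl
    simp only [List.map_cons, List.map_nil, List.cons.injEq] at hσ
    exact ⟨σ, hσ.1, hσ.2.1, by simp [hσ], by simp [hσ]⟩

/-- The two colours outside `A ∪ B` can serve as the image of `R.erase d`, which leaves enough
freedom to send `P.erase c` to `A.erase α` or off it. -/
theorem exists_perm_compatible [Fintype C] (hC : 7 ≤ Fintype.card C) (hαβ : α ≠ β)
    (hP : #P = 3) (hR : #R = 3) (hA : #A = 3) (hcP : c ∈ P) (hdR : d ∈ R)
    (hαA : α ∈ A) (hβB : β ∈ B) (hcR : c ∉ R)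
    (hPR : P.erase c = R.erase d ∨ Disjoint (P.erase c) (R.erase d)) (hAB : #(A ∪ B) ≤ 5) :
    ∃ σ : Equiv.Perm C, σ c = α ∧ σ d = β ∧
      Compatible (P.image σ) A α ∧ Compatible (R.image σ) B β := by
  obtain ⟨O, hO, hOAB⟩ := exists_card_eq_disjoint (n := 2) (A := A ∪ B) (by omega)
  rw [disjoint_union_right] at hOAB
  have hαO := disjoint_right.1 hOAB.1 hαA
  have hβO := disjoint_right.1 hOAB.2 hβB
  have hP' : #(P.erase c) = 2 := by rw [card_erase_of_mem hcP, hP]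
  have hR' : #(R.erase d) = 2 := by rw [card_erase_of_mem hdR, hR]
  have hA' : #(A.erase α) = 2 := by rw [card_erase_of_mem hαA, hA]
  have hcd : c ≠ d := fun h => hcR (h ▸ hdR)
  have hcR' : c ∉ R.erase d := mt mem_of_mem_erase hcR
  obtain ⟨σ, hσc, hσd, hσP, hσR⟩ : ∃ σ : Equiv.Perm C, σ c = α ∧ σ d = β ∧
      ((P.erase c).image σ = A.erase α ∨ Disjoint ((P.erase c).image σ) (A.erase α)) ∧
      (R.erase d).image σ = O := by
    rcases hPR with hPR | hPR
    · obtain ⟨σ, hσc, hσd, hσR⟩ := exists_perm_image_eq_pair hcd hαβ hR' hO hcR'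
        (notMem_erase d R) hαO hβO
      have hdisj : Disjoint ((P.erase c).image σ) (A.erase α) :=
        hPR ▸ hσR ▸ hOAB.1.mono_right (erase_subset α A)
      exact ⟨σ, hσc, hσd, Or.inr hdisj, hσR⟩
    · obtain ⟨A', hA'card, hαA', hA'O, hdβ, hA'A⟩ := exists_pair_eq_or_disjoint hC hA' hO hαβ
        (notMem_erase α A) hβO (hOAB.1.symm.mono_left (erase_subset α A)) (d ∈ P.erase c)
      obtain ⟨σ, hσc, hσd, hσP, hσR⟩ := exists_perm_image_eq_pairs hcd hαβ hP' hR' hA'card hO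
        (notMem_erase c P) hcR' (notMem_erase d R) hPR hαA' hαO hβO hA'O hdβ
      exact ⟨σ, hσc, hσd, hσP ▸ hA'A, hσR⟩
  rw [image_erase σ.injective, hσc] at hσP
  rw [image_erase σ.injective, hσd] at hσR
  refine ⟨σ, hσc, hσd, (compatible_iff_erase (hσc ▸ mem_image_of_mem σ hcP) hαA).2 hσP,
    (compatible_iff_erase (hσd ▸ mem_image_of_mem σ hdR) hβB).2 (Or.inr ?_)⟩
  exact hσR ▸ hOAB.2.mono_right (erase_subset β B)

end Permutations

open scoped Classical

section Cuts

variable {V E : Type*}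

/-- The edge `z` has one end in `T` and one end outside `T`. -/
def Crosses (T : Finset V) (z : Sym2 V) : Prop :=
  (∃ v ∈ z, v ∈ T) ∧ ∃ v ∈ z, v ∉ T

theorem crosses_mk {T : Finset V} {a b : V} : Crosses T s(a, b) ↔ ¬(a ∈ T ↔ b ∈ T) := by
  simp only [Crosses, Sym2.mem_iff, exists_eq_or_imp, exists_eq_left]
  tauto

theorem exists_ends_eq (ends : E → Sym2 V) (e : E) : ∃ u v, ends e = s(u, v) :=
  (Sym2.exists (f := fun z => ends e = z)).1 ⟨_, rfl⟩

variable [Fintype E]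

/-- The set of edges leaving `T` in the multigraph with edge set `E`, whose edge `e` has the
unordered pair of ends `ends e`. -/
noncomputable def cut (ends : E → Sym2 V) (T : Finset V) : Finset E :=
  univ.filter fun e => Crosses T (ends e)

/-- The set of edges with both ends in `Y`. -/
noncomputable def inside (ends : E → Sym2 V) (Y : Finset V) : Finset E :=
  univ.filter fun e => ends e ∈ Y.sym2

variable {ends : E → Sym2 V} {T Y : Finset V} {e : E} {u v : V}

theorem mem_cut : e ∈ cut ends T ↔ Crosses T (ends e) := by
  simp [cut]

theorem mem_inside : e ∈ inside ends Y ↔ ends e ∈ Y.sym2 := by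
  simp [inside]

theorem mem_cut_of_ends_eq (h : ends e = s(u, v)) : e ∈ cut ends T ↔ ¬(u ∈ T ↔ v ∈ T) := by
  rw [mem_cut, h, crosses_mk]

theorem mem_inside_of_ends_eq (h : ends e = s(u, v)) : e ∈ inside ends Y ↔ u ∈ Y ∧ v ∈ Y := by
  rw [mem_inside, h, mk_mem_sym2_iff]

theorem exists_ends_eq_of_mem_cut (h : e ∈ cut ends T) :
    ∃ u ∈ T, ∃ v ∉ T, ends e = s(u, v) := by
  obtain ⟨⟨u, hu, huT⟩, v, hv, hvT⟩ := mem_cut.1 h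
  have huv : u ≠ v := fun huv => hvT (huv ▸ huT)
  exact ⟨u, huT, v, hvT, (Sym2.mem_and_mem_iff huv).1 ⟨hu, hv⟩⟩

theorem exists_ends_eq_of_mem_cut_singleton (h : e ∈ cut ends {v}) :
    ∃ w ≠ v, ends e = s(v, w) := by
  obtain ⟨u, hu, w, hw, he⟩ := exists_ends_eq_of_mem_cut h
  obtain rfl := mem_singleton.1 hu
  exact ⟨w, by simpa using hw, he⟩

theorem cut_symmDiff (ends : E → Sym2 V) (S T : Finset V) :
    cut ends (symmDiff S T) = symmDiff (cut ends S) (cut ends T) := by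
  ext e
  obtain ⟨a, b, he⟩ := exists_ends_eq ends e
  simp only [mem_symmDiff, mem_cut_of_ends_eq he]
  tauto

theorem cut_empty : cut ends ∅ = ∅ := by
  ext e
  simp [mem_cut, Crosses]

theorem cut_univ [Fintype V] : cut ends univ = ∅ := by
  ext e
  simp [mem_cut, Crosses]

theorem symmDiff_singleton_of_notMem {α : Type*} {s : Finset α} {a : α} (h : a ∉ s) :
    symmDiff {a} s = insert a s := by
  ext b
  by_cases hb : b = a <;> simp_all [mem_symmDiff]

theorem symmDiff_singleton_of_mem {α : Type*} {s : Finset α} {a : α} (h : a ∈ s) :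
    symmDiff {a} s = s.erase a := by
  ext b
  by_cases hb : b = a <;> simp_all [mem_symmDiff]

theorem cut_insert (h : v ∉ T) : cut ends (insert v T) = symmDiff (cut ends {v}) (cut ends T) := by
  rw [← cut_symmDiff, symmDiff_singleton_of_notMem h]

theorem cut_erase (h : v ∈ T) : cut ends (T.erase v) = symmDiff (cut ends {v}) (cut ends T) := by
  rw [← cut_symmDiff, symmDiff_singleton_of_mem h]

theorem card_inter_symmDiff {α : Type*} (F P Q : Finset α) :
    #(F ∩ symmDiff P Q) + 2 * #(F ∩ P ∩ Q) = #(F ∩ P) + #(F ∩ Q) := by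
  have hP := card_sdiff_add_card_inter (F ∩ P) Q
  have hQ := card_sdiff_add_card_inter (F ∩ Q) P
  have hPQ : F ∩ symmDiff P Q = (F ∩ P) \ Q ∪ (F ∩ Q) \ P := by
    ext e
    simp only [mem_inter, mem_symmDiff, mem_union, mem_sdiff]
    tauto
  have hdisj : Disjoint ((F ∩ P) \ Q) ((F ∩ Q) \ P) :=
    disjoint_left.2 fun e => by simp only [mem_inter, mem_sdiff]; tauto
  rw [hPQ, card_union_of_disjoint hdisj]
  rw [inter_right_comm] at hQ
  omega

end Cuts

section Boundary

variable {V E A : Type*} [Fintype E] [AddCommGroup A] {ends : E → Sym2 V}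

/-- The net flow of `f` at `v`. In a group of exponent two orientations are irrelevant and a loop
contributes nothing, so only the edges leaving `{v}` are summed. -/
noncomputable def boundary (ends : E → Sym2 V) (f : E → A) (v : V) : A :=
  ∑ e ∈ cut ends {v}, f e

theorem boundary_add (f g : E → A) (v : V) :
    boundary ends (fun e => f e + g e) v = boundary ends f v + boundary ends g v :=
  sum_add_distrib

variable [Module (ZMod 2) A]

theorem sum_symmDiff {α : Type*} (P Q : Finset α) (f : α → A) :
    ∑ a ∈ symmDiff P Q, f a = ∑ a ∈ P, f a + ∑ a ∈ Q, f a := by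
  have hdisj : Disjoint (P \ Q) (Q \ P) := disjoint_sdiff_sdiff
  rw [symmDiff_def, sup_eq_union, sum_union hdisj, ← sum_inter_add_sum_sdiff P Q,
    ← sum_inter_add_sum_sdiff Q P, inter_comm Q P, add_add_add_comm, ZModModule.add_self, zero_add]

theorem sum_boundary (f : E → A) (T : Finset V) :
    ∑ v ∈ T, boundary ends f v = ∑ e ∈ cut ends T, f e := by
  induction T using Finset.induction_on with
  | empty => simp [cut_empty]
  | insert v T hv ih => rw [sum_insert hv, ih, cut_insert hv, sum_symmDiff, boundary]

end Boundary

section Menger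

variable {V E : Type*} [Fintype E] {ends : E → Sym2 V} {F : Finset E} {x y : V}

theorem card_inter_cut (ends : E → Sym2 V) (F : Finset E) (T : Finset V) :
    #(F ∩ cut ends T) = ∑ e ∈ F, if e ∈ cut ends T then 1 else 0 := by
  rw [← filter_mem_eq_inter, card_filter]

theorem card_inter_cut_submodular (ends : E → Sym2 V) (F : Finset E) (A B : Finset V) :
    #(F ∩ cut ends (A ∩ B)) + #(F ∩ cut ends (A ∪ B)) ≤
      #(F ∩ cut ends A) + #(F ∩ cut ends B) := by
  simp only [card_inter_cut, ← sum_add_distrib]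
  refine sum_le_sum fun e _ => ?_
  obtain ⟨a, b, he⟩ := exists_ends_eq ends e
  simp only [mem_cut_of_ends_eq he, mem_inter, mem_union]
  grind

theorem card_inter_cut_submodular_lt {A B : Finset V} {e : E} {u w : V} (heF : e ∈ F)
    (he : ends e = s(u, w)) (hu : u ∈ A \ B) (hw : w ∈ B \ A) :
    #(F ∩ cut ends (A ∩ B)) + #(F ∩ cut ends (A ∪ B)) <
      #(F ∩ cut ends A) + #(F ∩ cut ends B) := by
  simp only [card_inter_cut, ← sum_add_distrib]
  refine sum_lt_sum (fun f _ => ?_) ⟨e, heF, ?_⟩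
  · obtain ⟨a, b, hf⟩ := exists_ends_eq ends f
    simp only [mem_cut_of_ends_eq hf, mem_inter, mem_union]
    grind
  · simp only [mem_cut_of_ends_eq he, mem_inter, mem_union]
    grind

/-- The number of `F`-edges leaving `T`, raised by two for each of `x ∉ T` and `y ∈ T`. It keeps
submodularity and turns the condition "every cut separating `x` from `y` has two edges" into a
lower bound for all sets `T`. -/
noncomputable def penalizedCut (ends : E → Sym2 V) (F : Finset E) (x y : V) (T : Finset V) : ℕ :=
  #(F ∩ cut ends T) + (if x ∈ T then 0 else 2) + if y ∈ T then 2 else 0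

/-- Every set of vertices containing `x` but not `y` is left by at least two edges of `F`. -/
def TwoConnects (ends : E → Sym2 V) (F : Finset E) (x y : V) : Prop :=
  ∀ T : Finset V, x ∈ T → y ∉ T → 2 ≤ #(F ∩ cut ends T)

theorem TwoConnects.two_le_penalizedCut (h : TwoConnects ends F x y) (T : Finset V) :
    2 ≤ penalizedCut ends F x y T := by
  have := h T
  grind [penalizedCut]

theorem penalizedCut_submodular (ends : E → Sym2 V) (F : Finset E) (x y : V) (A B : Finset V) :
    penalizedCut ends F x y (A ∩ B) + penalizedCut ends F x y (A ∪ B) ≤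
      penalizedCut ends F x y A + penalizedCut ends F x y B := by
  have := card_inter_cut_submodular ends F A B
  simp only [penalizedCut, mem_inter, mem_union]
  grind

theorem penalizedCut_submodular_lt {A B : Finset V} {e : E} {u w : V} (heF : e ∈ F)
    (he : ends e = s(u, w)) (hu : u ∈ A \ B) (hw : w ∈ B \ A) :
    penalizedCut ends F x y (A ∩ B) + penalizedCut ends F x y (A ∪ B) <
      penalizedCut ends F x y A + penalizedCut ends F x y B := by
  have := card_inter_cut_submodular_lt heF he hu hw
  simp only [penalizedCut, mem_inter, mem_union]
  grind

theorem TwoConnects.penalizedCut_inter_union (h : TwoConnects ends F x y) {S T : Finset V}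
    (hS : penalizedCut ends F x y S = 2) (hT : penalizedCut ends F x y T = 2) :
    penalizedCut ends F x y (S ∩ T) = 2 ∧ penalizedCut ends F x y (S ∪ T) = 2 := by
  have := penalizedCut_submodular ends F x y S T
  have := h.two_le_penalizedCut (S ∩ T)
  have := h.two_le_penalizedCut (S ∪ T)
  omega

theorem TwoConnects.exists_isGreatest_tight [Finite V] (h : TwoConnects ends F x y) (v : V) :
    ∃ A, IsGreatest {T | penalizedCut ends F x y T = 2 ∧ v ∉ T} A := by
  have := Fintype.ofFinite V
  refine ⟨(univ.filter fun T => penalizedCut ends F x y T = 2 ∧ v ∉ T).sup id,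
    sup_induction (p := fun T => penalizedCut ends F x y T = 2 ∧ v ∉ T) ?_ ?_ ?_,
    fun T hT => le_sup (f := id) (mem_filter.2 ⟨mem_univ T, hT⟩)⟩
  · simp [penalizedCut, cut_empty]
  · rintro S ⟨hS, hvS⟩ T ⟨hT, hvT⟩
    exact ⟨(h.penalizedCut_inter_union hS hT).2, by simp [hvS, hvT]⟩
  · exact fun T hT => (mem_filter.1 hT).2

theorem TwoConnects.exists_isLeast_tight [Finite V] (h : TwoConnects ends F x y) (v : V) :
    ∃ B, IsLeast {T | penalizedCut ends F x y T = 2 ∧ v ∈ T} B := by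
  have := Fintype.ofFinite V
  refine ⟨(univ.filter fun T => penalizedCut ends F x y T = 2 ∧ v ∈ T).inf id,
    inf_induction (p := fun T => penalizedCut ends F x y T = 2 ∧ v ∈ T) ?_ ?_ ?_,
    fun T hT => inf_le (f := id) (mem_filter.2 ⟨mem_univ T, hT⟩)⟩
  · simp [penalizedCut, cut_univ]
  · rintro S ⟨hS, hvS⟩ T ⟨hT, hvT⟩
    exact ⟨(h.penalizedCut_inter_union hS hT).1, by simp [hvS, hvT]⟩
  · exact fun T hT => (mem_filter.1 hT).2

theorem exists_tight_cut_of_minimal (hF : Minimal (TwoConnects ends · x y) F) {e : E}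
    (he : e ∈ F) : ∃ T, penalizedCut ends F x y T = 2 ∧ e ∈ cut ends T := by
  have hdel : ¬TwoConnects ends (F.erase e) x y := fun h =>
    notMem_erase e F (hF.le_of_le h (erase_subset e F) he)
  obtain ⟨T, hx, hy, hT⟩ : ∃ T, x ∈ T ∧ y ∉ T ∧ #(F.erase e ∩ cut ends T) < 2 := by
    simpa [TwoConnects] using hdel
  have hFT := hF.prop T hx hy
  rw [erase_inter] at hT
  by_cases heT : e ∈ cut ends T
  · rw [card_erase_of_mem (mem_inter.2 ⟨he, heT⟩)] at hT
    exact ⟨T, by simp only [penalizedCut, hx, hy, if_true, if_false]; omega, heT⟩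
  · rw [erase_eq_of_notMem (by simp [heT])] at hT
    omega

theorem mem_cut_isGreatest_iff_notMem_cut_isLeast {A B : Finset V} {e : E} {v : V}
    (hF : Minimal (TwoConnects ends · x y) F)
    (hA : IsGreatest {T | penalizedCut ends F x y T = 2 ∧ v ∉ T} A)
    (hB : IsLeast {T | penalizedCut ends F x y T = 2 ∧ v ∈ T} B)
    (he : e ∈ F ∩ cut ends {v}) : e ∈ cut ends A ↔ e ∉ cut ends B := by
  obtain ⟨⟨hA2, hvA⟩, hAmax⟩ := hA
  obtain ⟨⟨hB2, hvB⟩, hBmin⟩ := hB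
  rw [mem_inter] at he
  obtain ⟨w, -, hew⟩ := exists_ends_eq_of_mem_cut_singleton he.2
  obtain ⟨T, hT, heT⟩ := exists_tight_cut_of_minimal hF he.1
  have hAB : w ∈ A → w ∈ B := by
    intro hwA
    by_contra hwB
    have := penalizedCut_submodular_lt (x := x) (y := y) he.1 (hew.trans Sym2.eq_swap)
      (mem_sdiff.2 ⟨hwA, hwB⟩) (mem_sdiff.2 ⟨hvB, hvA⟩)
    have := hF.prop.two_le_penalizedCut (A ∩ B)
    have := hF.prop.two_le_penalizedCut (A ∪ B)
    omega
  have hBA : w ∈ B → w ∈ A := by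
    intro hwB
    rw [mem_cut_of_ends_eq hew] at heT
    by_cases hvT : v ∈ T
    · exact absurd (hBmin ⟨hT, hvT⟩ hwB) (by tauto)
    · exact hAmax ⟨hT, hvT⟩ (by tauto)
  rw [mem_cut_of_ends_eq hew, mem_cut_of_ends_eq hew]
  tauto

/-- Moving `v` into the largest tight set `A` avoiding it, or out of the smallest tight set `B`
containing it, cannot lower the penalized cut below two. As `v` has the same neighbours in `A` and
in `B`, the two inequalities together determine its degree modulo two. -/
theorem even_card_inter_cut_singleton_of_minimal [Finite V]
    (hF : Minimal (TwoConnects ends · x y) F) (v : V) : Even #(F ∩ cut ends {v}) := by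
  obtain ⟨A, hA⟩ := hF.prop.exists_isGreatest_tight v
  obtain ⟨B, hB⟩ := hF.prop.exists_isLeast_tight v
  have hdeg : #(F ∩ cut ends {v} ∩ cut ends A) + #(F ∩ cut ends {v} ∩ cut ends B) =
      #(F ∩ cut ends {v}) := by
    rw [← filter_mem_eq_inter (t := cut ends A), ← filter_mem_eq_inter (t := cut ends B),
      filter_congr fun e he => mem_cut_isGreatest_iff_notMem_cut_isLeast hF hA hB he, add_comm,
      card_filter_add_card_filter_not]
  obtain ⟨⟨hA2, hvA⟩, -⟩ := hA
  obtain ⟨⟨hB2, hvB⟩, -⟩ := hB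
  have hinsert := hF.prop.two_le_penalizedCut (insert v A)
  have herase := hF.prop.two_le_penalizedCut (B.erase v)
  have hcardA := card_inter_symmDiff F (cut ends {v}) (cut ends A)
  have hcardB := card_inter_symmDiff F (cut ends {v}) (cut ends B)
  rw [← cut_insert hvA] at hcardA
  rw [← cut_erase hvB] at hcardB
  simp only [penalizedCut, mem_insert, mem_erase] at hA2 hB2 hinsert herase
  rw [Nat.even_iff]
  grind

/-- Menger's theorem for two edge-disjoint paths, whose union is the even set obtained. -/
theorem TwoConnects.exists_even_subset [Finite V] (h : TwoConnects ends F x y) :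
    ∃ Z ⊆ F, (∀ v, Even #(Z ∩ cut ends {v})) ∧ TwoConnects ends Z x y := by
  obtain ⟨Z, hZF, hZ⟩ := exists_minimal_le_of_wellFoundedLT (TwoConnects ends · x y) F h
  exact ⟨Z, hZF, even_card_inter_cut_singleton_of_minimal hZ, hZ.prop⟩

end Menger

section Eulerian

variable {V E : Type*} [Fintype E] {ends : E → Sym2 V} {F Z : Finset E} {W X : Finset V} {x y : V}

/-- The edges `Z` form a connected subgraph with vertex set `W` in which all degrees are even
(possibly a single vertex without edges). -/
structure IsEulerianOn (ends : E → Sym2 V) (W : Finset V) (Z : Finset E) : Prop where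
  even : ∀ v, Even #(Z ∩ cut ends {v})
  subset_inside : Z ⊆ inside ends W
  connected : ∀ T ⊂ W, T.Nonempty → (Z ∩ cut ends T).Nonempty

theorem IsEulerianOn.subset_of_subset_inside (h : IsEulerianOn ends W Z)
    (hZ : Z ⊆ inside ends X) (hxW : x ∈ W) (hxX : x ∈ X) : W ⊆ X := by
  by_contra hWX
  have hssub : W ∩ X ⊂ W := inter_subset_left.ssubset_of_ne fun hW => hWX (inter_eq_left.1 hW)
  obtain ⟨e, he⟩ := h.connected (W ∩ X) hssub ⟨x, mem_inter.2 ⟨hxW, hxX⟩⟩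
  obtain ⟨heZ, hecut⟩ := mem_inter.1 he
  obtain ⟨a, b, hab⟩ := exists_ends_eq ends e
  have heW := (mem_inside_of_ends_eq hab).1 (h.subset_inside heZ)
  have heX := (mem_inside_of_ends_eq hab).1 (hZ heZ)
  simp only [mem_cut_of_ends_eq hab, mem_inter] at hecut
  tauto

theorem even_card_inter_inside_inter_cut (heven : ∀ v, Even #(Z ∩ cut ends {v}))
    (hW : Disjoint Z (cut ends W)) (v : V) : Even #(Z ∩ inside ends W ∩ cut ends {v}) := by
  by_cases hv : v ∈ W
  · suffices Z ∩ inside ends W ∩ cut ends {v} = Z ∩ cut ends {v} from this ▸ heven v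
    refine subset_antisymm (inter_subset_inter_right inter_subset_left) fun e he => ?_
    obtain ⟨heZ, hev⟩ := mem_inter.1 he
    obtain ⟨w, -, hew⟩ := exists_ends_eq_of_mem_cut_singleton hev
    have heW := disjoint_left.1 hW heZ
    simp only [mem_cut_of_ends_eq hew] at heW
    simp only [mem_inter, mem_inside_of_ends_eq hew]
    tauto
  · suffices Z ∩ inside ends W ∩ cut ends {v} = ∅ by simp [this]
    refine eq_empty_of_forall_notMem fun e he => ?_
    obtain ⟨heW, hev⟩ := mem_inter.1 he
    obtain ⟨w, -, hew⟩ := exists_ends_eq_of_mem_cut_singleton hev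
    exact hv ((mem_inside_of_ends_eq hew).1 (mem_inter.1 heW).2).1

theorem exists_isEulerianOn_component [Finite V] (heven : ∀ v, Even #(Z ∩ cut ends {v})) (x : V) :
    ∃ W, x ∈ W ∧ Disjoint Z (cut ends W) ∧ IsEulerianOn ends W (Z ∩ inside ends W) := by
  have := Fintype.ofFinite V
  obtain ⟨W, -, ⟨⟨hxW, hW⟩, hmin⟩⟩ := exists_minimal_le_of_wellFoundedLT
    (fun W => x ∈ W ∧ Disjoint Z (cut ends W)) univ ⟨mem_univ x, by simp [cut_univ]⟩
  refine ⟨W, hxW, hW, even_card_inter_inside_inter_cut heven hW, inter_subset_right,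
    fun T hTW hT => ?_⟩
  by_contra hcross
  have hZT : Disjoint Z (cut ends T) := by
    refine disjoint_left.2 fun e heZ heT => hcross ⟨e, ?_⟩
    obtain ⟨u, hu, w, -, huw⟩ := exists_ends_eq_of_mem_cut heT
    have heW := disjoint_left.1 hW heZ
    have huW := hTW.1 hu
    simp only [mem_cut_of_ends_eq huw] at heW
    simp only [mem_inter, mem_inside_of_ends_eq huw]
    tauto
  by_cases hxT : x ∈ T
  · exact hTW.2 (hmin ⟨hxT, hZT⟩ hTW.1)
  · have hsdiff : symmDiff W T = W \ T := by
      rw [symmDiff_def, sdiff_eq_bot_iff.2 hTW.1, sup_bot_eq]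
    have hclosed : Disjoint Z (cut ends (W \ T)) := by
      rw [← hsdiff, cut_symmDiff]
      exact (disjoint_sup_right.2 ⟨hW, hZT⟩).mono_right symmDiff_le_sup
    obtain ⟨u, hu⟩ := hT
    exact (mem_sdiff.1 (hmin ⟨mem_sdiff.2 ⟨hxW, hxT⟩, hclosed⟩ sdiff_subset (hTW.1 hu))).2 hu

theorem TwoConnects.exists_isEulerianOn [Finite V] (h : TwoConnects ends F x y) :
    ∃ W Z, Z ⊆ F ∧ x ∈ W ∧ y ∈ W ∧ IsEulerianOn ends W Z := by
  obtain ⟨Z, hZF, heven, hconn⟩ := h.exists_even_subset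
  obtain ⟨W, hxW, hW, hEuler⟩ := exists_isEulerianOn_component heven x
  refine ⟨W, _, inter_subset_left.trans hZF, hxW, ?_, hEuler⟩
  by_contra hyW
  have := hconn W hxW hyW
  rw [disjoint_iff_inter_eq_empty.1 hW, card_empty] at this
  omega

variable {A : Type*} [AddCommGroup A]

theorem boundary_single {e : E} {p q : V} (he : ends e = s(p, q)) (hpq : p ≠ q) (a : A) :
    boundary ends (Pi.single e a) = Pi.single p a + Pi.single q a := by
  funext v
  simp only [boundary, Pi.single_apply, sum_ite_eq', mem_cut_of_ends_eq he, mem_singleton,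
    Pi.add_apply]
  grind

variable [Module (ZMod 2) A]

/-- `Z` carries every demand of total zero that is supported on `T`. -/
def CarriesDemands (A : Type*) [AddCommGroup A] (ends : E → Sym2 V) (Z : Finset E)
    (T : Finset V) : Prop :=
  ∀ μ : V → A, (∀ v ∉ T, μ v = 0) → ∑ v ∈ T, μ v = 0 →
    ∃ f : E → A, (∀ e ∉ Z, f e = 0) ∧ boundary ends f = μ

theorem CarriesDemands.insert {T : Finset V} {e : E} {p q : V} (h : CarriesDemands A ends Z T)
    (he : e ∈ Z) (hpq : ends e = s(p, q)) (hp : p ∈ T) (hq : q ∉ T) :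
    CarriesDemands A ends Z (insert q T) := by
  intro μ hμ hsum
  have hne : p ≠ q := fun h => hq (h ▸ hp)
  let ν : V → A := μ + (Pi.single p (μ q) + Pi.single q (μ q))
  have hν : ∀ v ∉ T, ν v = 0 := by
    intro v hv
    by_cases hvq : v = q
    · subst hvq
      simp [ν, hne.symm, ZModModule.add_self]
    · have : v ≠ p := fun h => hv (h ▸ hp)
      simp [ν, hμ v (by simp [hv, hvq]), hvq, this]
  have hνsum : ∑ v ∈ T, ν v = 0 := by
    rw [sum_insert hq] at hsum
    simp only [ν, Pi.add_apply, sum_add_distrib, sum_pi_single', hp, hq, if_true, if_false,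
      add_zero]
    rw [add_comm, hsum]
  obtain ⟨f, hf, hfν⟩ := h ν hν hνsum
  refine ⟨f + Pi.single e (μ q), fun e' he' => ?_, funext fun v => ?_⟩
  · have : e' ≠ e := fun h => he' (h ▸ he)
    simp [hf e' he', this]
  · refine (boundary_add f (Pi.single e (μ q)) v).trans ?_
    rw [hfν, boundary_single hpq hne]
    simp only [ν, Pi.add_apply, add_assoc _ (_ + _), ZModModule.add_self, add_zero]

theorem IsEulerianOn.carriesDemands (h : IsEulerianOn ends W Z) : CarriesDemands A ends Z W := by
  obtain rfl | ⟨x, hx⟩ := W.eq_empty_or_nonempty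
  · exact fun μ hμ _ => ⟨0, by simp, funext fun v => by simp [boundary, hμ v]⟩
  have hsingleton : CarriesDemands A ends Z {x} := fun μ hμ hsum => by
    refine ⟨0, by simp, funext fun v => ?_⟩
    rw [sum_singleton] at hsum
    by_cases hv : v = x
    · simp [boundary, hv, hsum]
    · simp [boundary, hμ v (by simpa using hv)]
  obtain ⟨T, hxT, hT⟩ := (W.powerset.filter (CarriesDemands A ends Z)).exists_le_maximal
    (mem_filter.2 ⟨mem_powerset.2 (singleton_subset_iff.2 hx), hsingleton⟩)
  obtain ⟨hTW, hTcarries⟩ := mem_filter.1 hT.prop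
  rw [mem_powerset] at hTW
  obtain rfl | hssub := hTW.eq_or_ssubset
  · exact hTcarries
  obtain ⟨e, he⟩ := h.connected T hssub ⟨x, singleton_subset_iff.1 hxT⟩
  obtain ⟨heZ, heT⟩ := mem_inter.1 he
  obtain ⟨p, hp, q, hq, hpq⟩ := exists_ends_eq_of_mem_cut heT
  have hqW := ((mem_inside_of_ends_eq hpq).1 (h.subset_inside heZ)).2
  have hins := hT.le_of_ge (y := insert q T)
    (mem_filter.2 ⟨mem_powerset.2 (insert_subset hqW hTW), hTcarries.insert heZ hpq hp hq⟩)
    (subset_insert q T)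
  exact absurd (hins (mem_insert_self q T)) hq

theorem IsEulerianOn.exists_boundary_eq (h : IsEulerianOn ends W Z) (μ : V → A)
    (hμ : ∑ v ∈ W, μ v = 0) :
    ∃ f : E → A, (∀ e ∉ Z, f e = 0) ∧ ∀ v ∈ W, boundary ends f v = μ v := by
  obtain ⟨f, hf, hfμ⟩ := h.carriesDemands (fun v => if v ∈ W then μ v else 0)
    (fun v hv => if_neg hv) (by rw [← hμ]; exact sum_congr rfl fun v hv => if_pos hv)
  exact ⟨f, hf, fun v hv => by simp only [hfμ, if_pos hv]⟩

end Eulerian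

section NonzeroSum

variable {E A : Type*} [AddCommGroup A]

theorem exists_ne_zero_sum_eq_of_ne_zero (hA : ∀ m : A, ∃ a ≠ 0, a ≠ m) {B : Finset E}
    (hB : B.Nonempty) : ∀ m : A, m ≠ 0 → ∃ k : E → A, (∀ e, k e ≠ 0) ∧ ∑ e ∈ B, k e = m := by
  induction hB using Finset.Nonempty.cons_induction with
  | singleton b => exact fun m hm => ⟨fun _ => m, fun _ => hm, sum_singleton _ _⟩
  | cons b B hb _ ih =>
    intro m _
    obtain ⟨a, ha, ham⟩ := hA m
    obtain ⟨k, hk, hsum⟩ := ih (m - a) (sub_ne_zero.2 ham.symm)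
    refine ⟨Function.update k b a, fun e => ?_, ?_⟩
    · by_cases he : e = b <;> simp [he, ha, hk]
    · rw [sum_cons, Function.update_self, sum_update_of_notMem hb, hsum, add_sub_cancel]

theorem exists_ne_zero_sum_eq (hA : ∀ m : A, ∃ a ≠ 0, a ≠ m) {B : Finset E} (hB : 2 ≤ #B) (m : A) :
    ∃ k : E → A, (∀ e, k e ≠ 0) ∧ ∑ e ∈ B, k e = m := by
  obtain ⟨b, hb⟩ : B.Nonempty := card_pos.1 (by omega)
  have hrest : (B.erase b).Nonempty := card_pos.1 (by rw [card_erase_of_mem hb]; omega)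
  obtain ⟨a, ha, ham⟩ := hA m
  obtain ⟨k, hk, hsum⟩ :=
    exists_ne_zero_sum_eq_of_ne_zero hA hrest (m - a) (sub_ne_zero.2 ham.symm)
  refine ⟨Function.update k b a, fun e => ?_, ?_⟩
  · by_cases he : e = b <;> simp [he, ha, hk]
  · rw [← add_sum_erase B _ hb, Function.update_self, sum_update_of_notMem (notMem_erase b B), hsum,
      add_sub_cancel]

end NonzeroSum

section Flows

variable {V E : Type*} [Fintype E] {ends : E → Sym2 V} {Z : Finset E} {W X Y : Finset V}

/-- A nowhere-zero flow with values in `(ZMod 2)³`, conserved at the vertices of `Y` only, whose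
first coordinate lives inside `Y`. -/
structure IsEightFlowOn (ends : E → Sym2 V) (Y : Finset V)
    (φ : E → ZMod 2 × (ZMod 2 × ZMod 2)) : Prop where
  ne_zero : ∀ e, φ e ≠ 0
  conserved : ∀ v ∈ Y, boundary ends φ v = 0
  fst_eq_zero : ∀ e ∉ inside ends Y, (φ e).1 = 0

theorem isEightFlowOn_empty : IsEightFlowOn ends ∅ fun _ => (0, 1, 0) :=
  ⟨fun _ => by decide, by simp, fun _ _ => rfl⟩

theorem boundary_indicator_eq_zero {v : V} (h : Even #(Z ∩ cut ends {v})) :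
    boundary ends (fun e => if e ∈ Z then (1 : ZMod 2) else 0) v = 0 := by
  rw [boundary, sum_boole, filter_mem_eq_inter, inter_comm]
  exact (ZMod.natCast_eq_zero_iff_even).2 h

theorem boundary_prodMk {A B : Type*} [AddCommGroup A] [AddCommGroup B] (f : E → A) (g : E → B)
    (v : V) : boundary ends (fun e => (f e, g e)) v = (boundary ends f v, boundary ends g v) :=
  Prod.ext Prod.fst_sum Prod.snd_sum

theorem boundary_eq_zero {A : Type*} [AddCommGroup A] {f : E → A} {v : V}
    (h : ∀ e ∈ cut ends {v}, f e = 0) : boundary ends f v = 0 :=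
  sum_eq_zero h

theorem inside_mono (h : W ⊆ Y) : inside ends W ⊆ inside ends Y := fun _ he =>
  mem_inside.2 (sym2_mono h (mem_inside.1 he))

theorem notMem_inside_of_mem_cut_singleton {e : E} {v : V} (he : e ∈ cut ends {v}) (hv : v ∉ Y) :
    e ∉ inside ends Y := by
  obtain ⟨w, -, hvw⟩ := exists_ends_eq_of_mem_cut_singleton he
  exact fun h => hv ((mem_inside_of_ends_eq hvw).1 h).1

theorem notMem_inside_of_disjoint {e : E} (hd : Disjoint Y W) (he : e ∈ inside ends W) :
    e ∉ inside ends Y := by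
  obtain ⟨a, b, hab⟩ := exists_ends_eq ends e
  rw [mem_inside_of_ends_eq hab] at he ⊢
  exact fun h => disjoint_left.1 hd h.1 he.1

theorem notMem_inside_of_mem_cut {e : E} (he : e ∈ cut ends Y) : e ∉ inside ends Y := by
  obtain ⟨u, -, w, hw, huw⟩ := exists_ends_eq_of_mem_cut he
  exact fun h => hw ((mem_inside_of_ends_eq huw).1 h).2

theorem IsEulerianOn.exists_conserved {A : Type*} [AddCommGroup A] [Module (ZMod 2) A]
    (hA : ∀ m : A, ∃ a ≠ 0, a ≠ m) (hZ : IsEulerianOn ends W Z) {B : Finset E}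
    (hBW : B ⊆ cut ends W) (hB : 2 ≤ #B) (g : E → A) :
    ∃ g' : E → A, (∀ e ∈ B, g' e ≠ 0) ∧ (∀ e ∉ B, e ∉ Z → g' e = g e) ∧
      ∀ v ∈ W, boundary ends g' v = 0 := by
  obtain ⟨k, hk, hksum⟩ := exists_ne_zero_sum_eq hA hB (∑ e ∈ cut ends W \ B, g e)
  let g₁ : E → A := fun e => if e ∈ B then k e else g e
  have hsum : ∑ v ∈ W, boundary ends g₁ v = 0 := by
    rw [sum_boundary, ← sum_sdiff hBW, sum_congr rfl fun e he => if_neg (mem_sdiff.1 he).2,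
      sum_congr rfl fun e he => if_pos he, hksum, ZModModule.add_self]
  obtain ⟨h, hsupp, hbd⟩ := hZ.exists_boundary_eq (boundary ends g₁) hsum
  refine ⟨fun e => g₁ e + h e, fun e he => ?_, fun e heB heZ => ?_, fun v hv => ?_⟩
  · have heZ : e ∉ Z := fun heZ => notMem_inside_of_mem_cut (hBW he) (hZ.subset_inside heZ)
    simp [g₁, he, hsupp e heZ, hk e]
  · simp [g₁, heB, hsupp e heZ]
  · rw [boundary_add, hbd v hv, ZModModule.add_self]

/-- The first coordinate is extended by the Eulerian subgraph on `W`, and the second one is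
repaired along it. -/
theorem IsEightFlowOn.extend {φ : E → ZMod 2 × (ZMod 2 × ZMod 2)} (hφ : IsEightFlowOn ends Y φ)
    (hd : Disjoint Y W) (hZ : IsEulerianOn ends W Z)
    (hW : 2 ≤ #(cut ends W ∩ cut ends (Y ∪ W))) :
    ∃ ψ, IsEightFlowOn ends (Y ∪ W) ψ ∧ ∀ e, (ψ e).1 = (φ e).1 + if e ∈ Z then 1 else 0 := by
  obtain ⟨g, hgB, hg, hgW⟩ :=
    hZ.exists_conserved (by decide) inter_subset_left hW fun e => (φ e).2
  refine ⟨fun e => ((φ e).1 + if e ∈ Z then 1 else 0, g e), ⟨fun e he => ?_,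
    fun v hv => ?_, fun e he => ?_⟩, fun e => rfl⟩
  · obtain ⟨hfst, hsnd⟩ := Prod.mk_eq_zero.1 he
    by_cases heZ : e ∈ Z
    · have heY := notMem_inside_of_disjoint hd (hZ.subset_inside heZ)
      simp [hφ.fst_eq_zero e heY, heZ] at hfst
    · rw [if_neg heZ, add_zero] at hfst
      have heB := fun heB => hgB e heB hsnd
      exact hφ.ne_zero e (Prod.ext hfst ((hg e heB heZ).symm.trans hsnd))
  · by_cases hvW : v ∈ W
    · have hfst : boundary ends (fun e => (φ e).1) v = 0 := boundary_eq_zero fun e he =>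
        hφ.fst_eq_zero e (notMem_inside_of_mem_cut_singleton he (disjoint_right.1 hd hvW))
      rw [boundary_prodMk, boundary_add, hfst, hgW v hvW,
        boundary_indicator_eq_zero (hZ.even v), add_zero, Prod.mk_zero_zero]
    · rw [← hφ.conserved v (by simpa [hvW] using hv)]
      refine sum_congr rfl fun e he => ?_
      have heZ : e ∉ Z := fun heZ =>
        notMem_inside_of_mem_cut_singleton he hvW (hZ.subset_inside heZ)
      have heB : e ∉ cut ends W ∩ cut ends (Y ∪ W) := by
        obtain ⟨w, -, hvw⟩ := exists_ends_eq_of_mem_cut_singleton he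
        simp only [mem_inter, mem_cut_of_ends_eq hvw, hvW, hv]
        grind
      simp only [if_neg heZ, add_zero, hg e heB heZ]
  · have heZ : e ∉ Z := fun heZ => he (inside_mono subset_union_right (hZ.subset_inside heZ))
    simp [heZ, hφ.fst_eq_zero e fun heY => he (inside_mono subset_union_left heY)]

theorem card_inter_cut_add_card_inter_cut_sdiff {T : Finset V} (hT : T ⊆ X) (F : Finset E) :
    #(F ∩ cut ends T) + #(F ∩ cut ends (X \ T)) =
      #(F ∩ cut ends X) + 2 * #(F ∩ inside ends X ∩ cut ends T) := by
  have hinside : #(F ∩ inside ends X ∩ cut ends T) =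
      ∑ e ∈ F, if e ∈ inside ends X ∧ e ∈ cut ends T then 1 else 0 := by
    rw [← card_filter, inter_assoc, ← filter_mem_eq_inter]
    simp only [mem_inter]
  simp only [hinside, card_inter_cut, ← sum_add_distrib, mul_sum]
  refine sum_congr rfl fun e _ => ?_
  obtain ⟨a, b, hab⟩ := exists_ends_eq ends e
  have ha := @hT a
  have hb := @hT b
  simp only [mem_cut_of_ends_eq hab, mem_inside_of_ends_eq hab, mem_sdiff]
  grind

theorem twoConnects_inside {F : Finset E} {m : ℕ} {x y : V}
    (hm : ∀ T ⊂ X, T.Nonempty → m ≤ #(F ∩ cut ends T)) (hX : #(F ∩ cut ends X) + 2 < 2 * m)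
    (hx : x ∈ X) (hy : y ∈ X) : TwoConnects ends (inside ends X) x y := by
  intro T hxT hyT
  have hTX : T ∩ X ⊂ X :=
    inter_subset_right.ssubset_of_ne fun h => hyT (mem_inter.1 (h.symm ▸ hy)).1
  have hxTX : x ∈ T ∩ X := mem_inter.2 ⟨hxT, hx⟩
  have hcompl : X \ (T ∩ X) ⊂ X := sdiff_ssubset hTX.1 ⟨x, hxTX⟩
  have h₁ := hm _ hTX ⟨x, hxTX⟩
  have h₂ := hm _ hcompl ⟨y, by simp [hy, hyT]⟩
  have hcount := card_inter_cut_add_card_inter_cut_sdiff (ends := ends) hTX.1 F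
  have hle : #(F ∩ inside ends X ∩ cut ends (T ∩ X)) ≤ #(inside ends X ∩ cut ends T) := by
    refine card_le_card fun e he => ?_
    simp only [mem_inter] at he ⊢
    obtain ⟨a, b, hab⟩ := exists_ends_eq ends e
    simp only [mem_cut_of_ends_eq hab, mem_inside_of_ends_eq hab, mem_inter] at he ⊢
    tauto
  omega

theorem mem_cut_of_subset_of_mem_cut {e : E} {u : V} (hWY : W ⊆ Y) (hu : u ∈ W) (hue : u ∈ ends e)
    (he : e ∈ cut ends Y) : e ∈ cut ends W := by
  obtain ⟨w, hw⟩ := hue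
  rw [mem_cut_of_ends_eq hw] at he ⊢
  have := @hWY w
  have := hWY hu
  tauto

theorem cut_subset_inside_inter_cut_union (hXY : X ⊆ Y) :
    cut ends X ⊆ inside ends Y ∩ cut ends X ∪ cut ends X ∩ cut ends Y := by
  intro e he
  obtain ⟨u, hu, w, hw, huw⟩ := exists_ends_eq_of_mem_cut he
  have huY := hXY hu
  simp only [mem_union, mem_inter, mem_inside_of_ends_eq huw, mem_cut_of_ends_eq huw]
  tauto

variable [Finite V]

theorem exists_isEulerianOn_of_twoConnects_inside {x y : V}
    (h : TwoConnects ends (inside ends X) x y) (hx : x ∈ X) :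
    ∃ W Z, W ⊆ X ∧ x ∈ W ∧ y ∈ W ∧ IsEulerianOn ends W Z := by
  obtain ⟨W, Z, hZ, hxW, hyW, hEuler⟩ := h.exists_isEulerianOn
  exact ⟨W, Z, hEuler.subset_of_subset_inside hZ hxW hx, hxW, hyW, hEuler⟩

theorem exists_isEulerianOn_of_three_le_card_cut (hY : Y.Nonempty)
    (hcut : ∀ T ⊆ Y, T.Nonempty → 3 ≤ #(cut ends T)) :
    ∃ W Z, W ⊆ Y ∧ W.Nonempty ∧ IsEulerianOn ends W Z ∧ 2 ≤ #(cut ends W ∩ cut ends Y) := by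
  have hYY : inside ends Y ∩ cut ends Y = ∅ := disjoint_iff_inter_eq_empty.1
    (disjoint_right.2 fun e he => notMem_inside_of_mem_cut he)
  obtain ⟨X, hXY, ⟨hX, hX₁⟩, hmin⟩ := exists_minimal_le_of_wellFoundedLT
    (fun X => X.Nonempty ∧ #(inside ends Y ∩ cut ends X) ≤ 1) Y ⟨hY, by simp [hYY]⟩
  have hproper : ∀ T ⊂ X, T.Nonempty → 2 ≤ #(inside ends Y ∩ cut ends T) := fun T hTX hT => by
    by_contra hlt
    exact hTX.2 (hmin ⟨hT, by omega⟩ hTX.1)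
  have hB : 2 ≤ #(cut ends X ∩ cut ends Y) := by
    have := card_le_card (cut_subset_inside_inter_cut_union (ends := ends) hXY)
    have := card_union_le (inside ends Y ∩ cut ends X) (cut ends X ∩ cut ends Y)
    have := hcut X hXY hX
    omega
  obtain ⟨e, he, f, hf, hef⟩ := one_lt_card.1 hB
  obtain ⟨heX, heY⟩ := mem_inter.1 he
  obtain ⟨hfX, hfY⟩ := mem_inter.1 hf
  obtain ⟨x, hx, _, _, hxe⟩ := exists_ends_eq_of_mem_cut heX
  obtain ⟨y, hy, _, _, hyf⟩ := exists_ends_eq_of_mem_cut hfX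
  obtain ⟨W, Z, hWX, hxW, hyW, hEuler⟩ := exists_isEulerianOn_of_twoConnects_inside
    (twoConnects_inside hproper (by omega) hx hy) hx
  have hWY := hWX.trans hXY
  refine ⟨W, Z, hWY, ⟨x, hxW⟩, hEuler, one_lt_card.2
    ⟨e, mem_inter.2 ⟨mem_cut_of_subset_of_mem_cut hWY hxW ?_ heY, heY⟩,
      f, mem_inter.2 ⟨mem_cut_of_subset_of_mem_cut hWY hyW ?_ hfY, hfY⟩, hef⟩⟩
  · rw [hxe]
    exact Sym2.mem_mk_left _ _
  · rw [hyf]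
    exact Sym2.mem_mk_left _ _

theorem exists_isEightFlowOn_of_three_le_card_cut (Y : Finset V)
    (hcut : ∀ T ⊆ Y, T.Nonempty → 3 ≤ #(cut ends T)) : ∃ φ, IsEightFlowOn ends Y φ := by
  induction Y using Finset.strongInduction with
  | H Y ih =>
    obtain rfl | hY := Y.eq_empty_or_nonempty
    · exact ⟨_, isEightFlowOn_empty⟩
    obtain ⟨W, Z, hWY, hW, hZ, hB⟩ := exists_isEulerianOn_of_three_le_card_cut hY hcut
    obtain ⟨φ, hφ⟩ := ih (Y \ W) (sdiff_ssubset hWY hW) fun T hT => hcut T (hT.trans sdiff_subset)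
    obtain ⟨ψ, hψ, -⟩ := hφ.extend sdiff_disjoint hZ (by rwa [sdiff_union_of_subset hWY])
    exact ⟨ψ, sdiff_union_of_subset hWY ▸ hψ⟩

/-- In a region left by three edges, the first coordinate of an 8-flow can be made to pass through
two prescribed vertices at which edges leave. -/
theorem exists_isEightFlowOn_fst_ne_zero {x y : V} {e f : E}
    (hcut : ∀ T ⊆ X, T.Nonempty → 3 ≤ #(cut ends T)) (hX : #(cut ends X) = 3)
    (he : e ∈ cut ends X) (hf : f ∈ cut ends X) (hef : e ≠ f) (hxe : x ∈ ends e) (hx : x ∈ X)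
    (hyf : y ∈ ends f) (hy : y ∈ X) (hxy : x ≠ y) :
    ∃ φ, IsEightFlowOn ends X φ ∧ (∃ e ∈ cut ends {x}, (φ e).1 ≠ 0) ∧
      ∃ e ∈ cut ends {y}, (φ e).1 ≠ 0 := by
  have hconn : TwoConnects ends (inside ends X) x y :=
    twoConnects_inside (F := univ) (m := 3) (by simpa using fun T hT => hcut T hT.1)
      (by simp [hX]) hx hy
  obtain ⟨W, Z, hWX, hxW, hyW, hZ⟩ := exists_isEulerianOn_of_twoConnects_inside hconn hx
  have hB : 2 ≤ #(cut ends W ∩ cut ends (X \ W ∪ W)) := by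
    rw [sdiff_union_of_subset hWX]
    exact one_lt_card.2 ⟨e, mem_inter.2 ⟨mem_cut_of_subset_of_mem_cut hWX hxW hxe he, he⟩,
      f, mem_inter.2 ⟨mem_cut_of_subset_of_mem_cut hWX hyW hyf hf, hf⟩, hef⟩
  obtain ⟨φ, hφ⟩ := exists_isEightFlowOn_of_three_le_card_cut (X \ W)
    fun T hT => hcut T (hT.trans sdiff_subset)
  obtain ⟨ψ, hψ, hψZ⟩ := hφ.extend sdiff_disjoint hZ hB
  have hthrough : ∀ v, {v} ⊂ W → ∃ e ∈ cut ends {v}, (ψ e).1 ≠ 0 := by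
    intro v hvW
    obtain ⟨e, he⟩ := hZ.connected {v} hvW (singleton_nonempty v)
    obtain ⟨heZ, hev⟩ := mem_inter.1 he
    refine ⟨e, hev, ?_⟩
    rw [hψZ, if_pos heZ,
      hφ.fst_eq_zero e (notMem_inside_of_disjoint sdiff_disjoint (hZ.subset_inside heZ)), zero_add]
    exact one_ne_zero
  have hssub : ∀ v, ∀ w ∈ W, v ∈ W → v ≠ w → {v} ⊂ W := fun v w hw hv hvw =>
    ⟨singleton_subset_iff.2 hv, fun h => hvw (mem_singleton.1 (h hw)).symm⟩
  exact ⟨ψ, sdiff_union_of_subset hWX ▸ hψ, hthrough x (hssub x y hyW hxW hxy),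
    hthrough y (hssub y x hxW hyW hxy.symm)⟩

end Flows

section Contraction

variable {V E A : Type*} [Fintype E] [AddCommGroup A] {ends : E → Sym2 V}
  {T Y : Finset V} {φ : E → A} {z z' : V}

theorem cut_map {W : Type*} {p : V → W} {T : Finset V} {T' : Finset W}
    (h : ∀ v, v ∈ T ↔ p v ∈ T') : cut (fun e => (ends e).map p) T' = cut ends T := by
  ext e
  obtain ⟨a, b, hab⟩ := exists_ends_eq ends e
  rw [mem_cut_of_ends_eq hab, mem_cut_of_ends_eq (u := p a) (v := p b) (by simp [hab]), h a, h b]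

theorem cut_contract_of_notMem (hz : z ∉ T) (hz' : z' ∉ T) :
    cut (fun e => (ends e).map (Function.update id z z')) T = cut ends T :=
  cut_map fun v => by
    obtain rfl | hv := eq_or_ne v z
    · simp [hz, hz']
    · simp [hv]

theorem cut_contract_of_mem (hz' : z' ∈ T) :
    cut (fun e => (ends e).map (Function.update id z z')) T = cut ends (insert z T) :=
  cut_map fun v => by
    obtain rfl | hv := eq_or_ne v z
    · simp [hz']
    · simp [hv]

variable [Module (ZMod 2) A]

theorem boundary_eq_zero_of_sum_cut_eq_zero (hz : z ∈ T) (hsum : ∑ e ∈ cut ends T, φ e = 0)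
    (h : ∀ v ∈ T, v ≠ z → boundary ends φ v = 0) : boundary ends φ z = 0 := by
  rw [← hsum, ← sum_boundary, sum_eq_single_of_mem z hz h]

/-- Across a cut `{a, b}` with `a = zz'` a flow of the contraction of `a` lifts by giving `a` the
value of `b`. -/
theorem exists_conserved_of_contract {a b : E} (hab : a ≠ b) (hT : cut ends T = {a, b})
    (hTY : T ⊆ Y) (ha : ends a = s(z, z')) (hz : z ∈ T) (hz' : z' ∉ T) (hφ : ∀ e, φ e ≠ 0)
    (hcons : ∀ v ∈ Y.erase z,
      boundary (fun e => (ends e).map (Function.update id z z')) φ v = 0) :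
    ∃ ψ : E → A, (∀ e, ψ e ≠ 0) ∧ ∀ v ∈ Y, boundary ends ψ v = 0 := by
  have hzz' : z ≠ z' := fun h => hz' (h ▸ hz)
  set ψ := Function.update φ a (φ b) with hψ
  have hψφ : ∀ e ≠ a, ψ e = φ e := fun e he => Function.update_of_ne he _ _
  have hother : ∀ v ∈ Y, v ≠ z → v ≠ z' → boundary ends ψ v = 0 := by
    intro v hv hvz hvz'
    rw [← hcons v (mem_erase.2 ⟨hvz, hv⟩), boundary,
      boundary, cut_contract_of_notMem (by simpa using hvz.symm) (by simpa using hvz'.symm)]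
    refine sum_congr rfl fun e he => hψφ e ?_
    rintro rfl
    simp [mem_cut_of_ends_eq ha, hvz.symm, hvz'.symm] at he
  have hbz : boundary ends ψ z = 0 := by
    refine boundary_eq_zero_of_sum_cut_eq_zero hz ?_ fun v hv hvz =>
      hother v (hTY hv) hvz fun h => hz' (h ▸ hv)
    rw [hT, sum_pair hab, hψφ b hab.symm, hψ, Function.update_self, ZModModule.add_self]
  have hbz' : z' ∈ Y → boundary ends ψ z' = 0 := by
    intro hzY
    have hpair := sum_boundary (ends := ends) ψ {z, z'}
    rw [sum_pair hzz', hbz, zero_add] at hpair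
    rw [hpair, ← hcons z' (mem_erase.2 ⟨hzz'.symm, hzY⟩), boundary,
      cut_contract_of_mem (mem_singleton_self z')]
    refine sum_congr rfl fun e he => hψφ e ?_
    rintro rfl
    simp [mem_cut_of_ends_eq ha] at he
  refine ⟨ψ, fun e => ?_, fun v hv => ?_⟩
  · by_cases he : e = a <;> simp [hψ, he, hφ]
  · by_cases hvz : v = z
    · exact hvz ▸ hbz
    · by_cases hvz' : v = z'
      · exact hvz' ▸ hbz' (hvz' ▸ hv)
      · exact hother v hv hvz hvz'

theorem card_cut_contract_ne_one (hY : ∀ S ⊆ Y, #(cut ends S) ≠ 1) (hz : z ∈ Y) :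
    ∀ S ⊆ Y.erase z, #(cut (fun e => (ends e).map (Function.update id z z')) S) ≠ 1 := by
  intro S hS
  have hSY := hS.trans (erase_subset z Y)
  by_cases hz' : z' ∈ S
  · rw [cut_contract_of_mem hz']
    exact hY _ (insert_subset hz hSY)
  · rw [cut_contract_of_notMem (fun h => notMem_erase z Y (hS h)) hz']
    exact hY S hSY

theorem exists_conserved_of_card_cut_ne_one [Finite V] (ends : E → Sym2 V) (Y : Finset V)
    (hY : ∀ T ⊆ Y, #(cut ends T) ≠ 1) :
    ∃ φ : E → ZMod 2 × (ZMod 2 × ZMod 2), (∀ e, φ e ≠ 0) ∧ ∀ v ∈ Y, boundary ends φ v = 0 := by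
  induction Y using Finset.strongInduction generalizing ends with
  | H Y ih =>
    by_cases hcut : ∀ T ⊆ Y, T.Nonempty → 3 ≤ #(cut ends T)
    · obtain ⟨φ, hφ⟩ := exists_isEightFlowOn_of_three_le_card_cut Y hcut
      exact ⟨φ, hφ.ne_zero, hφ.conserved⟩
    push Not at hcut
    obtain ⟨T, hTY, ⟨z, hz⟩, hT⟩ := hcut
    have hT₁ := hY T hTY
    obtain hT₀ | hT₂ : #(cut ends T) = 0 ∨ #(cut ends T) = 2 := by omega
    · obtain ⟨φ, hφ, hcons⟩ := ih (Y.erase z) (erase_ssubset (hTY hz)) ends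
        fun S hS => hY S (hS.trans (erase_subset z Y))
      refine ⟨φ, hφ, fun v hv => ?_⟩
      by_cases hvz : v = z
      · subst hvz
        exact boundary_eq_zero_of_sum_cut_eq_zero hz (by simp [card_eq_zero.1 hT₀])
          fun w hw hwv => hcons w (mem_erase.2 ⟨hwv, hTY hw⟩)
      · exact hcons v (mem_erase.2 ⟨hvz, hv⟩)
    · obtain ⟨a, b, hab, hTab⟩ := card_eq_two.1 hT₂
      obtain ⟨z, hz, z', hz', ha⟩ :=
        exists_ends_eq_of_mem_cut (hTab ▸ mem_insert_self a {b} : a ∈ cut ends T)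
      obtain ⟨φ, hφ, hcons⟩ := ih (Y.erase z) (erase_ssubset (hTY hz)) _
        (card_cut_contract_ne_one (z' := z') hY (hTY hz))
      exact exists_conserved_of_contract hab hTab hTY ha hz hz' hφ hcons

end Contraction

section Regions

variable {V E C : Type*} {ends : E → Sym2 V} {X X₁ X₂ : Finset V} {c c' c₁ c₂ : E → C} {e : E}
  {u v : V}

theorem eq_and_eq_of_ends_eq {u' v' : V} (hdisj : Disjoint X₁ X₂) (he : ends e = s(u, v))
    (he' : ends e = s(u', v')) (hu : u ∈ X₁) (hv' : v' ∈ X₂) :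
    u' = u ∧ v' = v := by
  rcases Sym2.eq_iff.1 (he'.symm.trans he) with h | ⟨-, rfl⟩
  · exact h
  · exact absurd hv' (disjoint_left.1 hdisj hu)

variable [Fintype E] [DecidableEq C]

/-- The set of colours on the edges at `v`, other than loops. -/
noncomputable def colorsAt (ends : E → Sym2 V) (c : E → C) (v : V) : Finset C :=
  (cut ends {v}).image c

/-- `c` is normal as far as the vertices of `X` are concerned: it is proper at each of them, and
every edge with both ends in `X` is poor or rich. -/
structure IsNormalOn (ends : E → Sym2 V) (X : Finset V) (c : E → C) : Prop where
  injOn : ∀ v ∈ X, Set.InjOn c (cut ends {v})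
  compatible : ∀ e u v, ends e = s(u, v) → u ∈ X → v ∈ X →
    Compatible (colorsAt ends c u) (colorsAt ends c v) (c e)

theorem mem_ends_of_mem_cut_singleton (h : e ∈ cut ends {v}) : v ∈ ends e := by
  obtain ⟨w, -, he⟩ := exists_ends_eq_of_mem_cut_singleton h
  exact he ▸ Sym2.mem_mk_left v w

theorem mem_cut_singleton_left (h : ends e = s(u, v)) (huv : u ≠ v) : e ∈ cut ends {u} := by
  simp [mem_cut_of_ends_eq h, huv.symm]

theorem mem_cut_singleton_right (h : ends e = s(u, v)) (huv : u ≠ v) : e ∈ cut ends {v} :=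
  mem_cut_singleton_left (h.trans Sym2.eq_swap) huv.symm

theorem colorsAt_congr (h : ∀ e ∈ cut ends {v}, c e = c' e) :
    colorsAt ends c v = colorsAt ends c' v :=
  image_congr h

theorem colorsAt_comp {D : Type*} [DecidableEq D] (σ : C → D) :
    colorsAt ends (σ ∘ c) v = (colorsAt ends c v).image σ :=
  image_image.symm

theorem mem_colorsAt (h : e ∈ cut ends {v}) : c e ∈ colorsAt ends c v :=
  mem_image_of_mem c h

theorem IsNormalOn.card_colorsAt (h : IsNormalOn ends X c) (hdeg : #(cut ends {v}) = 3)
    (hv : v ∈ X) : #(colorsAt ends c v) = 3 :=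
  (card_image_of_injOn (h.injOn v hv)).trans hdeg

theorem IsNormalOn.comp (h : IsNormalOn ends X c) {D : Type*} [DecidableEq D] {σ : C → D}
    (hσ : σ.Injective) : IsNormalOn ends X (σ ∘ c) where
  injOn v hv := hσ.comp_injOn (h.injOn v hv)
  compatible e u v he hu hv := by
    rw [colorsAt_comp, colorsAt_comp]
    exact (h.compatible e u v he hu hv).image hσ

theorem IsNormalOn.congr (h : IsNormalOn ends X c) (hcc' : ∀ e, ∀ v ∈ X, v ∈ ends e → c' e = c e) :
    IsNormalOn ends X c' := by
  have hcut (v) (hv : v ∈ X) (e) (he : e ∈ cut ends {v}) : c' e = c e :=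
    hcc' e v hv (mem_ends_of_mem_cut_singleton he)
  refine ⟨fun v hv => (h.injOn v hv).congr fun e he => (hcut v hv e he).symm, ?_⟩
  intro e u v he hu hv
  rw [colorsAt_congr (hcut u hu), colorsAt_congr (hcut v hv),
    hcc' e u hu (he ▸ Sym2.mem_mk_left u v)]
  exact h.compatible e u v he hu hv

theorem IsNormalOn.union (h₁ : IsNormalOn ends X₁ c) (h₂ : IsNormalOn ends X₂ c)
    (hcross : ∀ e u v, ends e = s(u, v) → u ∈ X₁ → v ∈ X₂ →
      Compatible (colorsAt ends c u) (colorsAt ends c v) (c e)) :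
    IsNormalOn ends (X₁ ∪ X₂) c := by
  refine ⟨fun v hv => (mem_union.1 hv).elim (h₁.injOn v) (h₂.injOn v), fun e u v he hu hv => ?_⟩
  rcases mem_union.1 hu with hu | hu <;> rcases mem_union.1 hv with hv | hv
  · exact h₁.compatible e u v he hu hv
  · exact hcross e u v he hu hv
  · exact (hcross e v u (he.trans Sym2.eq_swap) hv hu).symm
  · exact h₂.compatible e u v he hu hv

theorem IsNormalOn.exists_union (hdisj : Disjoint X₁ X₂) (h₁ : IsNormalOn ends X₁ c₁)
    (h₂ : IsNormalOn ends X₂ c₂)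
    (hcross : ∀ e u v, ends e = s(u, v) → u ∈ X₁ → v ∈ X₂ →
      c₁ e = c₂ e ∧ Compatible (colorsAt ends c₁ u) (colorsAt ends c₂ v) (c₁ e)) :
    ∃ c : E → C, IsNormalOn ends (X₁ ∪ X₂) c := by
  let c : E → C := fun e => if ∃ v ∈ X₁, v ∈ ends e then c₁ e else c₂ e
  have hc₁ (e) (v) (hv : v ∈ X₁) (he : v ∈ ends e) : c e = c₁ e := if_pos ⟨v, hv, he⟩
  have hc₂ (e) (v) (hv : v ∈ X₂) (he : v ∈ ends e) : c e = c₂ e := by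
    by_cases hex : ∃ u ∈ X₁, u ∈ ends e
    · obtain ⟨u, hu, hue⟩ := hex
      have huv : u ≠ v := fun huv => disjoint_left.1 hdisj hu (huv ▸ hv)
      exact (hc₁ e u hu hue).trans (hcross e u v ((Sym2.mem_and_mem_iff huv).1 ⟨hue, he⟩) hu hv).1
    · exact if_neg hex
  refine ⟨c, (h₁.congr hc₁).union (h₂.congr hc₂) fun e u v he hu hv => ?_⟩
  rw [colorsAt_congr fun e he => hc₁ e u hu (mem_ends_of_mem_cut_singleton he),
    colorsAt_congr fun e he => hc₂ e v hv (mem_ends_of_mem_cut_singleton he),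
    hc₁ e u hu (he ▸ Sym2.mem_mk_left u v)]
  exact (hcross e u v he hu hv).2

theorem mem_cut_inter_cut (hdisj : Disjoint X₁ X₂) (he : ends e = s(u, v)) (hu : u ∈ X₁)
    (hv : v ∈ X₂) : e ∈ cut ends X₁ ∩ cut ends X₂ := by
  rw [mem_inter, mem_cut_of_ends_eq he, mem_cut_of_ends_eq he]
  have hu' := disjoint_left.1 hdisj hu
  have hv' := disjoint_right.1 hdisj hv
  tauto

/-- Across a single edge, the colours on one side can be permuted so as to make the edge poor. -/
theorem IsNormalOn.exists_union_of_card_le_one (hdeg : ∀ v, #(cut ends {v}) = 3)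
    (hdisj : Disjoint X₁ X₂) (h₁ : IsNormalOn ends X₁ c₁) (h₂ : IsNormalOn ends X₂ c₂)
    (hcard : #(cut ends X₁ ∩ cut ends X₂) ≤ 1) : ∃ c : E → C, IsNormalOn ends (X₁ ∪ X₂) c := by
  by_cases hex : ∃ e u v, ends e = s(u, v) ∧ u ∈ X₁ ∧ v ∈ X₂
  · obtain ⟨e, u, v, he, hu, hv⟩ := hex
    have huv : u ≠ v := fun huv => disjoint_left.1 hdisj hu (huv ▸ hv)
    obtain ⟨σ, hσe, hσ⟩ := exists_perm_image_eq_of_mem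
      ((h₁.card_colorsAt (hdeg u) hu).trans (h₂.card_colorsAt (hdeg v) hv).symm)
      (mem_colorsAt (mem_cut_singleton_left he huv))
      (mem_colorsAt (mem_cut_singleton_right he huv))
    refine (h₁.comp σ.injective).exists_union hdisj h₂ fun e' u' v' he' hu' hv' => ?_
    obtain rfl : e' = e := card_le_one.1 hcard _ (mem_cut_inter_cut hdisj he' hu' hv') _
      (mem_cut_inter_cut hdisj he hu hv)
    obtain ⟨rfl, rfl⟩ := eq_and_eq_of_ends_eq hdisj he he' hu hv'
    exact ⟨hσe, Or.inl ((colorsAt_comp σ).trans hσ)⟩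
  · exact h₁.exists_union hdisj h₂ fun e u v he hu hv => absurd ⟨e, u, v, he, hu, hv⟩ hex

end Regions

section LineColorings

variable {V E : Type*} [Fintype E] {ends : E → Sym2 V} {X Y : Finset V} {c : E → Color} {v : V}

theorem injOn_and_isLine_colorsAt (hdeg : #(cut ends {v}) = 3)
    (hv : boundary ends (fun e => (c e).1) v = 0) :
    Set.InjOn c (cut ends {v}) ∧ IsLine (colorsAt ends c v) :=
  injOn_and_isLine_image hdeg hv

/-- Two lines of the Fano plane are equal or meet in a single point. -/
theorem isNormalOn_of_boundary_eq_zero (hdeg : ∀ v, #(cut ends {v}) = 3)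
    (hc : ∀ v ∈ X, boundary ends (fun e => (c e).1) v = 0) : IsNormalOn ends X c where
  injOn v hv := (injOn_and_isLine_colorsAt (hdeg v) (hc v hv)).1
  compatible e u v he hu hv := by
    by_cases huv : u = v
    · exact Or.inl (huv ▸ rfl)
    · exact (injOn_and_isLine_colorsAt (hdeg u) (hc u hu)).2.compatible
        (injOn_and_isLine_colorsAt (hdeg v) (hc v hv)).2
        (mem_colorsAt (mem_cut_singleton_left he huv))
        (mem_colorsAt (mem_cut_singleton_right he huv))

theorem exists_color_boundary_eq_zero [Finite V] (hY : ∀ T ⊆ Y, #(cut ends T) ≠ 1) :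
    ∃ c : E → Color, ∀ v ∈ Y, boundary ends (fun e => (c e).1) v = 0 := by
  obtain ⟨φ, hφ, hcons⟩ := exists_conserved_of_card_cut_ne_one ends Y hY
  exact ⟨fun e => ⟨φ e, hφ e⟩, hcons⟩

end LineColorings

section TwoEdgeCuts

variable {V E C : Type*} [Fintype E] [DecidableEq C] {ends : E → Sym2 V} {S : Finset V}
  {e f : E} {x y p q : V}

theorem mem_of_mem_cut_erase (hS : e ∈ cut ends (S.erase y)) (he : ends e = s(y, x)) :
    x ∈ S.erase y := by
  rw [mem_cut_of_ends_eq he] at hS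
  simpa using hS

theorem ne_of_cut_eq_pair (hdeg : ∀ v, #(cut ends {v}) = 3) (hef : e ≠ f)
    (hS : cut ends S = {e, f}) (hmin : ∀ T ⊂ S, T.Nonempty → 3 ≤ #(cut ends T))
    (hx : ends e = s(x, p)) (hxS : x ∈ S) (hp : p ∉ S)
    (hy : ends f = s(y, q)) (hq : q ∉ S) : x ≠ y := by
  rintro rfl
  have hsub : cut ends S ⊆ cut ends {x} := by
    simp only [hS, insert_subset_iff, singleton_subset_iff]
    exact ⟨mem_cut_singleton_left hx fun h => hp (h ▸ hxS),
      mem_cut_singleton_left hy fun h => hq (h ▸ hxS)⟩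
  have hcut : #(cut ends (S.erase x)) = 1 := by
    rw [cut_erase hxS, symmDiff_of_ge hsub, card_sdiff_of_subset hsub, hdeg, hS, card_pair hef]
  have hne : (S.erase x).Nonempty := by
    by_contra hempty
    simp [not_nonempty_iff_eq_empty.1 hempty, cut_empty] at hcut
  have := hmin _ (erase_ssubset hxS) hne
  omega

theorem cut_erase_eq_insert (hef : e ≠ f) (hS : cut ends S = {e, f}) (hyS : y ∈ S)
    (he : e ∉ cut ends {y}) (hf : f ∈ cut ends {y}) :
    cut ends (S.erase y) = insert e ((cut ends {y}).erase f) := by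
  rw [cut_erase hyS, hS]
  ext g
  simp only [mem_symmDiff, mem_insert, mem_singleton, mem_erase]
  by_cases hge : g = e <;> by_cases hgf : g = f <;> simp_all

theorem notMem_ends_of_mem_erase (hyS : y ∈ S) (hfS : f ∈ cut ends S) (hf : f ∈ cut ends {y})
    (hx : x ∈ S.erase y) : x ∉ ends f := by
  intro hxf
  have hfxy : ends f = s(x, y) :=
    (Sym2.mem_and_mem_iff (ne_of_mem_erase hx)).1 ⟨hxf, mem_ends_of_mem_cut_singleton hf⟩
  exact (mem_cut_of_ends_eq hfxy).1 hfS (iff_of_true (mem_of_mem_erase hx) hyS)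

variable {c : E → C} {F : Finset E} {d : C}

theorem colorsAt_update_self (hF : cut ends {y} = insert f F) (hfF : f ∉ F) :
    colorsAt ends (Function.update c f d) y = insert d (F.image c) := by
  rw [colorsAt, hF, image_insert, Function.update_self]
  congr 1
  exact image_congr fun e he => Function.update_of_ne (ne_of_mem_of_not_mem he hfF) _ _

theorem colorsAt_update_of_notMem (hx : x ∉ ends f) :
    colorsAt ends (Function.update c f d) x = colorsAt ends c x :=
  colorsAt_congr fun e he => Function.update_of_ne
    (show e ≠ f from fun hef => hx (hef ▸ mem_ends_of_mem_cut_singleton he)) _ _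

theorem IsNormalOn.update (h : IsNormalOn ends (S.erase y) c) (hyS : y ∈ S)
    (hfS : f ∈ cut ends S) (hF : cut ends {y} = insert f F) (hfF : f ∉ F)
    (hinj : Set.InjOn c F) (hd : d ∉ F.image c)
    (hcomp : ∀ e ∈ F, ∀ w ∈ S.erase y, ends e = s(y, w) →
      Compatible (insert d (F.image c)) (colorsAt ends c w) (c e)) :
    IsNormalOn ends S (Function.update c f d) := by
  have hne {e : E} (he : e ≠ f) : Function.update c f d e = c e := Function.update_of_ne he _ _
  have hf : f ∈ cut ends {y} := hF ▸ mem_insert_self f F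
  have hnotMem (w) (hw : w ∈ S.erase y) : w ∉ ends f := notMem_ends_of_mem_erase hyS hfS hf hw
  have hnormal : IsNormalOn ends (S.erase y) (Function.update c f d) :=
    h.congr fun e w hw hwe => hne fun hef => hnotMem w hw (hef ▸ hwe)
  have hy : IsNormalOn ends {y} (Function.update c f d) := by
    refine ⟨fun v hv => ?_, fun e u v _ hu hv => Or.inl ?_⟩
    · rw [mem_singleton.1 hv, hF, coe_insert, Set.injOn_insert (by simpa using hfF)]
      have hEq : Set.EqOn c (Function.update c f d) F :=
        fun e he => (hne (ne_of_mem_of_not_mem he hfF)).symm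
      refine ⟨hinj.congr hEq, ?_⟩
      rw [← hEq.image_eq, Function.update_self, ← coe_image]
      exact mt mem_coe.1 hd
    · rw [mem_singleton.1 hu, mem_singleton.1 hv]
  rw [← insert_erase hyS, insert_eq]
  refine hy.union hnormal fun e u w he hu hw => ?_
  obtain rfl := mem_singleton.1 hu
  have hef : e ≠ f := by
    rintro rfl
    exact hnotMem w hw (he ▸ Sym2.mem_mk_right u w)
  have heF : e ∈ F := mem_of_mem_insert_of_ne
    (hF ▸ mem_cut_singleton_left he (ne_of_mem_erase hw).symm) hef
  rw [colorsAt_update_self hF hfF, colorsAt_update_of_notMem (hnotMem w hw), hne hef]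
  exact hcomp e heF w hw he

end TwoEdgeCuts

section MinimalTwoEdgeCuts

variable {V E : Type*} [Fintype E] {ends : E → Sym2 V} {S X : Finset V} {e f : E} {x y p q : V}

/-- The flow vanishes in its first coordinate on the edges leaving `X`, but not on all edges at
`x` or at `y`, so the lines at `x` and `y` differ from the one formed by the colours of the edges
leaving `X`. -/
theorem exists_color_inter_eq_singleton [Finite V] (hdeg : ∀ v, #(cut ends {v}) = 3)
    (hcut : ∀ T ⊆ X, T.Nonempty → 3 ≤ #(cut ends T)) (hX : #(cut ends X) = 3)
    (he : e ∈ cut ends X) (hf : f ∈ cut ends X) (hef : e ≠ f) (hxe : e ∈ cut ends {x})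
    (hx : x ∈ X) (hyf : f ∈ cut ends {y}) (hy : y ∈ X) (hxy : x ≠ y) :
    ∃ θ : E → Color, (∀ v ∈ X, boundary ends (fun e => (θ e).1) v = 0) ∧
      colorsAt ends θ x ∩ (cut ends X).image θ = {θ e} ∧
      colorsAt ends θ y ∩ (cut ends X).image θ = {θ f} := by
  obtain ⟨φ, hφ, ⟨b, hb, hb0⟩, b', hb', hb'0⟩ := exists_isEightFlowOn_fst_ne_zero hcut hX he hf hef
    (mem_ends_of_mem_cut_singleton hxe) hx (mem_ends_of_mem_cut_singleton hyf) hy hxy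
  let θ : E → Color := fun e => ⟨φ e, hφ.ne_zero e⟩
  have hL : IsLine ((cut ends X).image θ) :=
    (injOn_and_isLine_image hX ((sum_boundary φ X).symm.trans (sum_eq_zero hφ.conserved))).2
  have hfst : ∀ a ∈ (cut ends X).image θ, a.1.1 = 0 :=
    forall_mem_image.2 fun e he => hφ.fst_eq_zero e (notMem_inside_of_mem_cut he)
  have hmeet {v : V} {g k : E} (hv : v ∈ X) (hg : g ∈ cut ends X) (hgv : g ∈ cut ends {v})
      (hk : k ∈ cut ends {v}) (hk0 : (φ k).1 ≠ 0) :
      colorsAt ends θ v ∩ (cut ends X).image θ = {θ g} :=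
    ((injOn_and_isLine_colorsAt (hdeg v) (hφ.conserved v hv)).2.compatible hL (mem_colorsAt hgv)
      (mem_image_of_mem θ hg)).resolve_left fun h => hk0 (hfst _ (h ▸ mem_colorsAt hk))
  exact ⟨θ, hφ.conserved, hmeet hx he hxe hb hb0, hmeet hy hf hyf hb' hb'0⟩

theorem notMem_image_of_notMem_colorsAt {θ : E → Color} {F : Finset E} {d : Color}
    (hF : F ⊆ cut ends {y})
    (hd : ∀ g ∈ F, ∀ w, ends g = s(y, w) → d ∉ colorsAt ends θ w) : d ∉ F.image θ := by
  rw [mem_image]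
  rintro ⟨g, hg, rfl⟩
  obtain ⟨w, hwy, hgw⟩ := exists_ends_eq_of_mem_cut_singleton (hF hg)
  exact hd g hg w hgw (mem_colorsAt (mem_cut_singleton_right hgw hwy.symm))

theorem isNormalOn_update_of_boundary_eq_zero {θ : E → Color} {F : Finset E} {d : Color}
    (hdeg : ∀ v, #(cut ends {v}) = 3) (hθ : ∀ v ∈ S.erase y, boundary ends (fun e => (θ e).1) v = 0)
    (hyS : y ∈ S) (hfS : f ∈ cut ends S) (hF : cut ends {y} = insert f F) (hfF : f ∉ F)
    (hinj : Set.InjOn θ F) (hsub : F ⊆ cut ends (S.erase y))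
    (hmeet : ∀ g ∈ F, ∀ w, ends g = s(y, w) → d ∉ colorsAt ends θ w ∧
      colorsAt ends θ w ∩ (cut ends (S.erase y)).image θ = {θ g}) :
    IsNormalOn ends S (Function.update θ f d) := by
  refine (isNormalOn_of_boundary_eq_zero hdeg hθ).update hyS hfS hF hfF hinj
    (notMem_image_of_notMem_colorsAt (hF ▸ subset_insert f F) fun g hg w hgw =>
      (hmeet g hg w hgw).1) fun g hg w _ hgw => Or.inr ?_
  obtain ⟨hd, hinter⟩ := hmeet g hg w hgw
  have hmem : θ g ∈ colorsAt ends θ w := (mem_inter.1 (hinter ▸ mem_singleton_self (θ g))).1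
  rw [insert_inter_of_notMem hd]
  refine Subset.antisymm ?_
    (singleton_subset_iff.2 (mem_inter.2 ⟨mem_image_of_mem θ hg, hmem⟩))
  rw [← hinter, inter_comm]
  exact inter_subset_inter_left (image_subset_image hsub)

theorem exists_color_of_cut_eq_pair [Finite V] (hends : ends.Injective)
    (hdeg : ∀ v, #(cut ends {v}) = 3) (hmin : ∀ T ⊂ S, T.Nonempty → 3 ≤ #(cut ends T))
    (hyS : y ∈ S) (hey : e ∉ cut ends {y}) (hfy : f ∈ cut ends {y})
    (hX : cut ends (S.erase y) = insert e ((cut ends {y}).erase f)) :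
    ∃ (θ : E → Color) (d : Color), (∀ v ∈ S.erase y, boundary ends (fun e => (θ e).1) v = 0) ∧
      d ≠ θ e ∧ ∀ g ∈ (cut ends {y}).erase f, ∀ w, ends g = s(y, w) → d ∉ colorsAt ends θ w ∧
        colorsAt ends θ w ∩ (cut ends (S.erase y)).image θ = {θ g} := by
  obtain ⟨a, b, hab, hF⟩ : ∃ a b, a ≠ b ∧ (cut ends {y}).erase f = {a, b} :=
    card_eq_two.1 (by rw [card_erase_of_mem hfy, hdeg])
  have hX3 : #(cut ends (S.erase y)) = 3 := by
    rw [hX, card_insert_of_notMem (mt mem_of_mem_erase hey), hF, card_pair hab]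
  have ha : a ∈ cut ends (S.erase y) := by simp [hX, hF]
  have hb : b ∈ cut ends (S.erase y) := by simp [hX, hF]
  obtain ⟨u, -, hu⟩ := exists_ends_eq_of_mem_cut_singleton
    (mem_of_mem_erase (hF ▸ mem_insert_self a {b}))
  obtain ⟨w, -, hw⟩ := exists_ends_eq_of_mem_cut_singleton
    (mem_of_mem_erase (hF ▸ mem_insert_of_mem (mem_singleton_self b)))
  have huw : u ≠ w := fun h => hab (hends (hu.trans (h ▸ hw.symm)))
  have huS := mem_of_mem_cut_erase ha hu
  have hwS := mem_of_mem_cut_erase hb hw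
  obtain ⟨θ, hθ, hmu, hmw⟩ := exists_color_inter_eq_singleton hdeg
    (fun T hT => hmin T (hT.trans_ssubset (erase_ssubset hyS))) hX3 ha hb hab
    (mem_cut_singleton_right hu (ne_of_mem_erase huS).symm) huS
    (mem_cut_singleton_right hw (ne_of_mem_erase hwS).symm) hwS huw
  have hline (v) (hv : v ∈ S.erase y) := (injOn_and_isLine_colorsAt (hdeg v) (hθ v hv)).2
  obtain ⟨d, hd⟩ := (hline u huS).exists_notMem_insert_union (hline w hwS) (θ e)
  simp only [mem_insert, mem_union, not_or] at hd
  refine ⟨θ, d, hθ, hd.1, fun g hg v hgv => ?_⟩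
  rw [hF, mem_insert, mem_singleton] at hg
  rcases hg with rfl | rfl
  · obtain rfl := Sym2.congr_right.1 (hu.symm.trans hgv)
    exact ⟨hd.2.1, hmu⟩
  · obtain rfl := Sym2.congr_right.1 (hw.symm.trans hgv)
    exact ⟨hd.2.2, hmw⟩

/-- At the end `y` of `f` an eight-flow on `S.erase y` is completed by a colour `d` that is
absent from both neighbours of `y`: the colours at `y` are those of the line through the edges
leaving `S.erase y`, with that of `e` replaced by `d`. -/
theorem exists_isNormalOn_of_cut_eq_pair [Finite V] (hends : ends.Injective)
    (hdeg : ∀ v, #(cut ends {v}) = 3) (hef : e ≠ f)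
    (hS : cut ends S = {e, f}) (hmin : ∀ T ⊂ S, T.Nonempty → 3 ≤ #(cut ends T))
    (hx : ends e = s(x, p)) (hxS : x ∈ S) (hp : p ∉ S)
    (hy : ends f = s(y, q)) (hyS : y ∈ S) (hq : q ∉ S) :
    ∃ c : E → Color, IsNormalOn ends S c ∧ c e ∉ colorsAt ends c y ∧
      ((colorsAt ends c x).erase (c e) = (colorsAt ends c y).erase (c f) ∨
        Disjoint ((colorsAt ends c x).erase (c e)) ((colorsAt ends c y).erase (c f))) := by
  have hxy : x ≠ y := ne_of_cut_eq_pair hdeg hef hS hmin hx hxS hp hy hq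
  have hxS' : x ∈ S.erase y := mem_erase.2 ⟨hxy, hxS⟩
  have hex : e ∈ cut ends {x} := mem_cut_singleton_left hx fun h => hp (h ▸ hxS)
  have hey : e ∉ cut ends {y} := by
    simp [mem_cut_of_ends_eq hx, hxy, show p ≠ y from fun h => hp (h ▸ hyS)]
  have hfy : f ∈ cut ends {y} := mem_cut_singleton_left hy fun h => hq (h ▸ hyS)
  have hfS : f ∈ cut ends S := by simp [hS]
  have hX := cut_erase_eq_insert hef hS hyS hey hfy
  obtain ⟨θ, d, hθ, hde, hmeet⟩ := exists_color_of_cut_eq_pair hends hdeg hmin hyS hey hfy hX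
  set F := (cut ends {y}).erase f
  have hF : cut ends {y} = insert f F := (insert_erase hfy).symm
  have hfF : f ∉ F := notMem_erase f _
  have heF : e ∉ F := mt mem_of_mem_erase hey
  have hX3 : #(cut ends (S.erase y)) = 3 := by
    rw [hX, card_insert_of_notMem heF, card_erase_of_mem hfy, hdeg]
  obtain ⟨hinj, hL⟩ := injOn_and_isLine_image hX3 ((sum_boundary _ _).symm.trans (sum_eq_zero hθ))
  have hnormal := isNormalOn_update_of_boundary_eq_zero hdeg hθ hyS hfS hF hfF
    (hinj.mono (by simp [hX])) (hX ▸ subset_insert e F) hmeet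
  have hd : d ∉ F.image θ := notMem_image_of_notMem_colorsAt (erase_subset f _)
    fun g hg w hgw => (hmeet g hg w hgw).1
  rw [hX, coe_insert, Set.injOn_insert (mt mem_coe.1 heF), ← coe_image, mem_coe] at hinj
  rw [hX, image_insert] at hL
  have hcomp := (compatible_iff_erase (mem_colorsAt hex) (mem_insert_self _ _)).1 <|
    (injOn_and_isLine_colorsAt (hdeg x) (hθ x hxS')).2.compatible hL (mem_colorsAt hex)
      (mem_insert_self _ _)
  refine ⟨Function.update θ f d, hnormal, ?_⟩
  rw [colorsAt_update_of_notMem (notMem_ends_of_mem_erase hyS hfS hfy hxS'),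
    colorsAt_update_self hF hfF, Function.update_of_ne hef, Function.update_self, erase_insert hd]
  rw [erase_insert hinj.2] at hcomp
  exact ⟨by simpa only [mem_insert, not_or] using ⟨hde.symm, hinj.2⟩, hcomp⟩

end MinimalTwoEdgeCuts

section ExistsNormal

variable {V E : Type*} [Fintype E] {ends : E → Sym2 V} {S X Z : Finset V} {e f g : E}
  {x y p q : V}

theorem IsNormalOn.exists_union_of_cut_eq_pair {c c₂ : E → Color}
    (hdeg : ∀ v, #(cut ends {v}) = 3) (hdisj : Disjoint S Z) (hS : cut ends S = {e, f})
    (hx : ends e = s(x, p)) (hxS : x ∈ S) (hp : p ∈ Z)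
    (hy : ends f = s(y, q)) (hyS : y ∈ S) (hq : q ∈ Z)
    (hc : IsNormalOn ends S c) (hcy : c e ∉ colorsAt ends c y)
    (hcxy : (colorsAt ends c x).erase (c e) = (colorsAt ends c y).erase (c f) ∨
      Disjoint ((colorsAt ends c x).erase (c e)) ((colorsAt ends c y).erase (c f)))
    (hc₂ : ∀ v ∈ Z, boundary ends (fun e => (c₂ e).1) v = 0) (hne : c₂ e ≠ c₂ f) :
    ∃ c : E → Color, IsNormalOn ends (S ∪ Z) c := by
  have hxp : x ≠ p := fun h => disjoint_left.1 hdisj hxS (h ▸ hp)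
  have hyq : y ≠ q := fun h => disjoint_left.1 hdisj hyS (h ▸ hq)
  have hlineP := (injOn_and_isLine_colorsAt (hdeg p) (hc₂ p hp)).2
  have hlineQ := (injOn_and_isLine_colorsAt (hdeg q) (hc₂ q hq)).2
  obtain ⟨σ, hσe, hσf, hσx, hσy⟩ := exists_perm_compatible card_color.ge hne
    (hc.card_colorsAt (hdeg x) hxS) (hc.card_colorsAt (hdeg y) hyS) hlineP.1
    (mem_colorsAt (mem_cut_singleton_left hx hxp)) (mem_colorsAt (mem_cut_singleton_left hy hyq))
    (mem_colorsAt (mem_cut_singleton_right hx hxp)) (mem_colorsAt (mem_cut_singleton_right hy hyq))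
    hcy hcxy (hlineP.card_union_le hlineQ)
  refine (hc.comp σ.injective).exists_union hdisj (isNormalOn_of_boundary_eq_zero hdeg hc₂) ?_
  intro g u v hg hu hv
  have hmem := (mem_inter.1 (mem_cut_inter_cut hdisj hg hu hv)).1
  rw [hS, mem_insert, mem_singleton] at hmem
  rw [colorsAt_comp, Function.comp_apply]
  rcases hmem with rfl | rfl
  · obtain ⟨rfl, rfl⟩ := eq_and_eq_of_ends_eq hdisj hx hg hxS hv
    exact ⟨hσe, hσe ▸ hσx⟩
  · obtain ⟨rfl, rfl⟩ := eq_and_eq_of_ends_eq hdisj hy hg hyS hv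
    exact ⟨hσf, hσf ▸ hσy⟩

theorem cut_sdiff_eq_insert (hSX : S ⊆ X) (hX : cut ends X = {g}) (hg : g ∉ cut ends S) :
    cut ends (X \ S) = insert g (cut ends S) := by
  rw [← symmDiff_of_ge hSX, cut_symmDiff, hX, symmDiff_singleton_of_notMem hg]

theorem exists_ssubset_card_cut_eq_two (hdeg : ∀ v, #(cut ends {v}) = 3)
    (hX : cut ends X = {g}) (hcut : ∀ T ⊂ X, T.Nonempty → 2 ≤ #(cut ends T)) :
    ∃ S ⊂ X, #(cut ends S) = 2 ∧ g ∉ cut ends S ∧ ∀ T ⊂ S, T.Nonempty → 3 ≤ #(cut ends T) := by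
  have hgX : g ∈ cut ends X := hX ▸ mem_singleton_self g
  obtain ⟨v, hv, w, hw, hg⟩ := exists_ends_eq_of_mem_cut hgX
  have hgv : g ∈ cut ends {v} := mem_cut_singleton_left hg fun h => hw (h ▸ hv)
  have herase : #(cut ends (X.erase v)) = 2 := by
    rw [cut_erase hv, hX, symmDiff_comm, symmDiff_singleton_of_mem hgv, card_erase_of_mem hgv, hdeg]
  have hnonempty : (X.erase v).Nonempty := by
    by_contra hempty
    simp [not_nonempty_iff_eq_empty.1 hempty, cut_empty] at herase
  obtain ⟨S, hSX, hS, hmin⟩ := exists_minimal_le_of_wellFoundedLT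
    (fun S : Finset V => S.Nonempty ∧ #(cut ends S) ≤ 2) _ ⟨hnonempty, herase.le⟩
  have hSX' : S ⊂ X := hSX.trans_ssubset (erase_ssubset hv)
  refine ⟨S, hSX', hS.2.antisymm (hcut S hSX' hS.1), ?_, fun T hT hne => ?_⟩
  · rw [mem_cut_of_ends_eq hg, not_not]
    exact iff_of_false (fun h => notMem_erase v X (hSX h)) fun h => hw (hSX'.1 h)
  · by_contra hlt
    exact hT.2 (hmin ⟨hne, by omega⟩ hT.1)

theorem color_ne_of_boundary_eq_zero {c : E → Color}
    (hc : ∀ v ∈ Z, boundary ends (fun e => (c e).1) v = 0) (hZ : cut ends Z = {g, e, f})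
    (hg : g ∉ ({e, f} : Finset E)) (hef : e ≠ f) : c e ≠ c f := by
  have hcard : #(cut ends Z) = 3 := by rw [hZ, card_insert_of_notMem hg, card_pair hef]
  have hinj := (injOn_and_isLine_image (θ := c) hcard
    ((sum_boundary _ _).symm.trans (sum_eq_zero hc))).1
  exact hinj.ne (by simp [hZ]) (by simp [hZ]) hef

theorem exists_isNormalOn_of_cut_eq_singleton [Finite V] (hends : ends.Injective)
    (hdeg : ∀ v, #(cut ends {v}) = 3) (hX : cut ends X = {g})
    (hcut : ∀ T ⊂ X, T.Nonempty → 2 ≤ #(cut ends T)) :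
    ∃ c : E → Color, IsNormalOn ends X c := by
  obtain ⟨S, hSX, hS2, hgS, hmin⟩ := exists_ssubset_card_cut_eq_two hdeg hX hcut
  obtain ⟨e, f, hef, hS⟩ := card_eq_two.1 hS2
  have hXS := cut_sdiff_eq_insert hSX.1 hX hgS
  have houter {k : E} {u v : V} (hk : k ∈ cut ends S) (huv : ends k = s(u, v)) (hu : u ∈ S) :
      v ∈ X \ S := by
    have hk' : k ∈ cut ends (X \ S) := hXS ▸ mem_insert_of_mem hk
    rw [mem_cut_of_ends_eq huv] at hk'
    simpa [hu] using hk'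
  have heS : e ∈ cut ends S := by simp [hS]
  have hfS : f ∈ cut ends S := by simp [hS]
  obtain ⟨x, hxS, p, hp, hx⟩ := exists_ends_eq_of_mem_cut heS
  obtain ⟨y, hyS, q, hq, hy⟩ := exists_ends_eq_of_mem_cut hfS
  obtain ⟨c, hc, hcy, hcxy⟩ :=
    exists_isNormalOn_of_cut_eq_pair hends hdeg hef hS hmin hx hxS hp hy hyS hq
  obtain ⟨c₂, hc₂⟩ := exists_color_boundary_eq_zero (ends := ends) (Y := X \ S) <| by
    intro T hT hT1
    rcases T.eq_empty_or_nonempty with rfl | hne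
    · simp [cut_empty] at hT1
    · have hSne : S.Nonempty := ⟨x, hxS⟩
      have := hcut T (hT.trans_ssubset (sdiff_ssubset hSX.1 hSne)) hne
      omega
  rw [← union_sdiff_of_subset hSX.1]
  exact hc.exists_union_of_cut_eq_pair hdeg disjoint_sdiff hS hx hxS (houter heS hx hxS) hy hyS
    (houter hfS hy hyS) hcy hcxy hc₂
    (color_ne_of_boundary_eq_zero hc₂ (hS ▸ hXS) (hS ▸ hgS) hef)

theorem exists_isNormalOn [Finite V] (hends : ends.Injective) (hdeg : ∀ v, #(cut ends {v}) = 3)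
    (X : Finset V) : ∃ c : E → Color, IsNormalOn ends X c := by
  induction X using Finset.strongInduction with
  | H X ih =>
    by_cases hT : ∃ T ⊂ X, T.Nonempty ∧ #(cut ends T ∩ cut ends (X \ T)) ≤ 1
    · obtain ⟨T, hTX, hne, hcard⟩ := hT
      obtain ⟨c₁, hc₁⟩ := ih T hTX
      obtain ⟨c₂, hc₂⟩ := ih (X \ T) (sdiff_ssubset hTX.1 hne)
      rw [← union_sdiff_of_subset hTX.1]
      exact hc₁.exists_union_of_card_le_one hdeg disjoint_sdiff hc₂ hcard
    have hcut : ∀ T ⊂ X, T.Nonempty → 2 ≤ #(cut ends T) := by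
      intro T hTX hne
      by_contra hlt
      have := card_le_card (inter_subset_left : cut ends T ∩ cut ends (X \ T) ⊆ cut ends T)
      exact hT ⟨T, hTX, hne, by omega⟩
    by_cases hX : #(cut ends X) = 1
    · obtain ⟨g, hg⟩ := card_eq_one.1 hX
      exact exists_isNormalOn_of_cut_eq_singleton hends hdeg hg hcut
    · obtain ⟨c, hc⟩ := exists_color_boundary_eq_zero (ends := ends) (Y := X) <| by
        intro T hTX hT1
        rcases T.eq_empty_or_nonempty with rfl | hne
        · simp [cut_empty] at hT1
        · have hTX' : T ⊂ X := hTX.ssubset_of_ne fun h => hX (h ▸ hT1)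
          have := hcut T hTX' hne
          omega
      exact ⟨c, isNormalOn_of_boundary_eq_zero hdeg hc⟩

end ExistsNormal

section SimpleGraphs

variable {V C : Type*} {G : SimpleGraph V}

theorem ncard_incidenceSet_of_isCubic (hG : IsCubic G) (v : V) : (G.incidenceSet v).ncard = 3 := by
  rw [← hG v, ← Nat.card_coe_set_eq, ← Nat.card_coe_set_eq]
  exact Nat.card_congr (G.incidenceSetEquivNeighborSet v)

theorem card_union_eq_three_or_five_of_compatible [DecidableEq C] {A B : Finset C} {k : C}
    (hA : #A = 3) (hB : #B = 3) (h : Compatible A B k) : #(A ∪ B) = 3 ∨ #(A ∪ B) = 5 := by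
  rcases h with rfl | h
  · exact .inl (by rwa [union_self])
  · have := card_union_add_card_inter A B
    rw [h, card_singleton, hA, hB] at this
    exact .inr (by omega)

variable [Fintype G.edgeSet]

theorem mem_cut_coe_singleton {e : G.edgeSet} {v : V} :
    e ∈ cut ((↑) : G.edgeSet → Sym2 V) {v} ↔ v ∈ (e : Sym2 V) := by
  refine ⟨mem_ends_of_mem_cut_singleton, fun hv => ?_⟩
  obtain ⟨w, hw⟩ := Sym2.mem_iff_exists.1 hv
  have hvw : G.Adj v w := by simpa [hw] using e.2
  exact mem_cut_singleton_left hw hvw.ne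

theorem coe_image_cut_singleton (v : V) :
    ((↑) : G.edgeSet → Sym2 V) '' (cut ((↑) : G.edgeSet → Sym2 V) {v} : Set G.edgeSet) =
      G.incidenceSet v := by
  ext e
  simp [mem_cut_coe_singleton, incidenceSet, and_comm]

theorem card_cut_singleton_of_isCubic (hG : IsCubic G) (v : V) :
    #(cut ((↑) : G.edgeSet → Sym2 V) {v}) = 3 := by
  rw [← ncard_incidenceSet_of_isCubic hG v, ← coe_image_cut_singleton,
    Set.ncard_image_of_injective _ Subtype.val_injective, Set.ncard_coe_finset]

variable [DecidableEq C] {c : G.edgeSet → C} {c' : Sym2 V → C}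

theorem colorSet_eq_coe_colorsAt (h : ∀ e : G.edgeSet, c' e = c e) (v : V) :
    colorSet G c' v = colorsAt ((↑) : G.edgeSet → Sym2 V) c v := by
  rw [colorSet, ← coe_image_cut_singleton, Set.image_image, colorsAt, coe_image]
  exact Set.image_congr fun e _ => h e

theorem isNormalEdgeColoring_of_isNormalOn_univ [Fintype V] (hG : IsCubic G)
    (hc : IsNormalOn ((↑) : G.edgeSet → Sym2 V) univ c) (h : ∀ e : G.edgeSet, c' e = c e) :
    IsNormalEdgeColoring G c' := by
  constructor
  · rintro e he f hf hne ⟨v, hve, hvf⟩ heq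
    rw [h ⟨e, he⟩, h ⟨f, hf⟩] at heq
    exact hne (congrArg Subtype.val (hc.injOn v (mem_univ v)
      (mem_coe.2 (mem_cut_coe_singleton.2 hve)) (mem_coe.2 (mem_cut_coe_singleton.2 hvf)) heq))
  · intro u v huv
    rw [IsPoorAt, IsRichAt, colorSet_eq_coe_colorsAt h, colorSet_eq_coe_colorsAt h, ← coe_union,
      Set.ncard_coe_finset]
    exact card_union_eq_three_or_five_of_compatible
      (hc.card_colorsAt (card_cut_singleton_of_isCubic hG u) (mem_univ u))
      (hc.card_colorsAt (card_cut_singleton_of_isCubic hG v) (mem_univ v))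
      (hc.compatible ⟨s(u, v), huv⟩ u v rfl (mem_univ u) (mem_univ v))

end SimpleGraphs

theorem exists_isNormalEdgeColoring_fin_seven {V : Type*} [Finite V] {G : SimpleGraph V}
    (hG : IsCubic G) :
    ∃ c : Sym2 V → Fin 7, IsNormalEdgeColoring G c := by
  have := Fintype.ofFinite V
  obtain ⟨c, hc⟩ := exists_isNormalOn Subtype.val_injective (card_cut_singleton_of_isCubic hG) univ
  let φ : Color ≃ Fin 7 := Fintype.equivFinOfCardEq card_color
  exact ⟨Function.extend (↑) (φ ∘ c) 0, isNormalEdgeColoring_of_isNormalOn_univ hG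
    (hc.comp φ.injective) fun e => Subtype.val_injective.extend_apply _ _ e⟩

end NormalColoring

section LowerBound

variable {V C : Type*} {G : SimpleGraph V} {c : Sym2 V → C}

theorem IsProperEdgeColoring.color_ne_left {u v w : V} (hc : IsProperEdgeColoring G c)
    (hv : G.Adj u v) (hw : G.Adj u w) (hvw : v ≠ w) : c s(u, v) ≠ c s(u, w) :=
  hc _ hv _ hw (fun h => hvw (Sym2.congr_right.1 h))
    ⟨u, Sym2.mem_mk_left u v, Sym2.mem_mk_left u w⟩

theorem IsProperEdgeColoring.color_ne_middle {u v w : V} (hc : IsProperEdgeColoring G c)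
    (hu : G.Adj u v) (hw : G.Adj v w) (huw : u ≠ w) : c s(u, v) ≠ c s(v, w) :=
  Sym2.eq_swap (a := v) (b := u) ▸ hc.color_ne_left hu.symm hw huw

theorem IsProperEdgeColoring.color_ne_right {u v w : V} (hc : IsProperEdgeColoring G c)
    (hv : G.Adj v u) (hw : G.Adj w u) (hvw : v ≠ w) : c s(v, u) ≠ c s(w, u) :=
  Sym2.eq_swap (a := u) (b := w) ▸ hc.color_ne_middle hv hw.symm hvw

theorem IsCubic.neighborSet_eq {u v w x : V} (hG : IsCubic G) (hv : G.Adj u v) (hw : G.Adj u w)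
    (hx : G.Adj u x) (hvw : v ≠ w) (hvx : v ≠ x) (hwx : w ≠ x) :
    G.neighborSet u = {v, w, x} := by
  refine (Set.eq_of_subset_of_ncard_le (by simp [Set.insert_subset_iff, hv, hw, hx]) ?_
    (Set.finite_of_ncard_ne_zero (by simp [hG u]))).symm
  rw [hG u, Set.ncard_eq_three.2 ⟨v, w, x, hvw, hvx, hwx, rfl⟩]

theorem colorSet_eq_image_neighborSet (G : SimpleGraph V) (c : Sym2 V → C) (u : V) :
    colorSet G c u = (fun v => c s(u, v)) '' G.neighborSet u := by
  ext k
  constructor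
  · rintro ⟨e, ⟨he, hu⟩, rfl⟩
    obtain ⟨v, rfl⟩ := Sym2.mem_iff_exists.1 hu
    exact ⟨v, he, rfl⟩
  · rintro ⟨v, hv, rfl⟩
    exact ⟨s(u, v), ⟨hv, Sym2.mem_mk_left u v⟩, rfl⟩

theorem IsCubic.colorSet_eq {u v w x : V} (hG : IsCubic G) (c : Sym2 V → C) (hv : G.Adj u v)
    (hw : G.Adj u w) (hx : G.Adj u x) (hvw : v ≠ w) (hvx : v ≠ x) (hwx : w ≠ x) :
    colorSet G c u = {c s(u, v), c s(u, w), c s(u, x)} := by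
  rw [colorSet_eq_image_neighborSet, hG.neighborSet_eq hv hw hx hvw hvx hwx, Set.image_insert_eq,
    Set.image_pair]

theorem IsNormalEdgeColoring.color_eq_of_color_eq {u v a b a' b' : V} (hG : IsCubic G)
    (hc : IsNormalEdgeColoring G c) (huv : G.Adj u v) (ha : G.Adj u a) (hb : G.Adj u b)
    (ha' : G.Adj v a') (hb' : G.Adj v b') (hva : v ≠ a) (hvb : v ≠ b) (hab : a ≠ b)
    (hua' : u ≠ a') (hub' : u ≠ b') (hab' : a' ≠ b') (heq : c s(u, a) = c s(v, a')) :
    c s(u, b) = c s(v, b') := by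
  by_contra hne
  have hunion : colorSet G c u ∪ colorSet G c v =
      {c s(u, v), c s(u, a), c s(u, b), c s(v, b')} := by
    rw [hG.colorSet_eq c huv ha hb hva hvb hab,
      hG.colorSet_eq c huv.symm ha' hb' hua' hub' hab', Sym2.eq_swap (a := v), heq]
    ext k
    simp only [Set.mem_union, Set.mem_insert_iff, Set.mem_singleton_iff]
    tauto
  have hfour : (colorSet G c u ∪ colorSet G c v).ncard = 4 := by
    rw [hunion, Set.ncard_eq_four]
    exact ⟨_, _, _, _, hc.1.color_ne_left huv ha hva, hc.1.color_ne_left huv hb hvb,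
      hc.1.color_ne_middle huv hb' hub', hc.1.color_ne_left ha hb hab,
      heq ▸ hc.1.color_ne_left ha' hb' hab', hne, rfl⟩
  have := hc.2 u v huv
  simp [IsPoorAt, IsRichAt, hfour] at this

/-- The vertices `v₁, …, v₅` span a copy of the graph `K` in `G`, with the labelling in which `v₁`
is the vertex subdividing the edge `v₂v₃` of `K₄`. Of the inequalities between the `vᵢ`, only those
for the pairs not joined by an edge of `K` are recorded. -/
structure IsSubdividedK4 (G : SimpleGraph V) (v₁ v₂ v₃ v₄ v₅ : V) : Prop where
  adj₁₂ : G.Adj v₁ v₂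
  adj₁₃ : G.Adj v₁ v₃
  adj₂₄ : G.Adj v₂ v₄
  adj₂₅ : G.Adj v₂ v₅
  adj₃₄ : G.Adj v₃ v₄
  adj₃₅ : G.Adj v₃ v₅
  adj₄₅ : G.Adj v₄ v₅
  ne₁₄ : v₁ ≠ v₄
  ne₁₅ : v₁ ≠ v₅
  ne₂₃ : v₂ ≠ v₃

namespace IsSubdividedK4

variable {v₁ v₂ v₃ v₄ v₅ : V}

theorem swap₂₃ (hK : IsSubdividedK4 G v₁ v₂ v₃ v₄ v₅) : IsSubdividedK4 G v₁ v₃ v₂ v₄ v₅ :=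
  ⟨hK.adj₁₃, hK.adj₁₂, hK.adj₃₄, hK.adj₃₅, hK.adj₂₄, hK.adj₂₅, hK.adj₄₅, hK.ne₁₄, hK.ne₁₅,
    hK.ne₂₃.symm⟩

theorem swap₄₅ (hK : IsSubdividedK4 G v₁ v₂ v₃ v₄ v₅) : IsSubdividedK4 G v₁ v₂ v₃ v₅ v₄ :=
  ⟨hK.adj₁₂, hK.adj₁₃, hK.adj₂₅, hK.adj₂₄, hK.adj₃₅, hK.adj₃₄, hK.adj₄₅.symm, hK.ne₁₅, hK.ne₁₄,
    hK.ne₂₃⟩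

theorem color₁₂_ne_color₃₄ (hK : IsSubdividedK4 G v₁ v₂ v₃ v₄ v₅) (hG : IsCubic G)
    (hc : IsNormalEdgeColoring G c) : c s(v₁, v₂) ≠ c s(v₃, v₄) := by
  intro h
  have h₂₅ : c s(v₂, v₅) = c s(v₄, v₅) :=
    hc.color_eq_of_color_eq hG hK.adj₂₄ hK.adj₁₂.symm hK.adj₂₅ hK.adj₃₄.symm hK.adj₄₅ hK.ne₁₄.symm
      hK.adj₄₅.ne hK.ne₁₅ hK.ne₂₃ hK.adj₂₅.ne hK.adj₃₅.ne
      (by rwa [Sym2.eq_swap (a := v₂), Sym2.eq_swap (a := v₄)])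
  exact hc.1.color_ne_right hK.adj₂₅ hK.adj₄₅ hK.adj₂₄.ne h₂₅

theorem color₁₂_eq_color₄₅_of_color₂₅_eq_color₃₄ (hK : IsSubdividedK4 G v₁ v₂ v₃ v₄ v₅)
    (hG : IsCubic G) (hc : IsNormalEdgeColoring G c) (h : c s(v₂, v₅) = c s(v₃, v₄)) :
    c s(v₁, v₂) = c s(v₄, v₅) := by
  rw [Sym2.eq_swap (a := v₁)]
  refine hc.color_eq_of_color_eq hG hK.adj₂₄ hK.adj₂₅ hK.adj₁₂.symm hK.adj₃₄.symm hK.adj₄₅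
    hK.adj₄₅.ne hK.ne₁₄.symm hK.ne₁₅.symm hK.ne₂₃ hK.adj₂₅.ne hK.adj₃₅.ne ?_
  rwa [Sym2.eq_swap (a := v₄)]

/-- If `v₂v₅` and `v₃v₄` had the same colour, then so would `v₂v₄` and `v₃v₅`, and both edges at
`v₁` would have the colour of `v₄v₅`. -/
theorem color₂₅_ne_color₃₄ (hK : IsSubdividedK4 G v₁ v₂ v₃ v₄ v₅) (hG : IsCubic G)
    (hc : IsNormalEdgeColoring G c) : c s(v₂, v₅) ≠ c s(v₃, v₄) := by
  intro h
  have h₂₄ : c s(v₄, v₂) = c s(v₅, v₃) :=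
    hc.color_eq_of_color_eq hG hK.adj₄₅ hK.adj₃₄.symm hK.adj₂₄.symm hK.adj₂₅.symm hK.adj₃₅.symm
      hK.adj₃₅.ne' hK.adj₂₅.ne' hK.ne₂₃.symm hK.adj₂₄.ne' hK.adj₃₄.ne' hK.ne₂₃
      (by rw [Sym2.eq_swap (a := v₄), Sym2.eq_swap (a := v₅), h])
  rw [Sym2.eq_swap (a := v₄), Sym2.eq_swap (a := v₅)] at h₂₄
  have h₁₂ := hK.color₁₂_eq_color₄₅_of_color₂₅_eq_color₃₄ hG hc h
  have h₁₃ := hK.swap₂₃.color₁₂_eq_color₄₅_of_color₂₅_eq_color₃₄ hG hc h₂₄.symm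
  exact hc.1.color_ne_left hK.adj₁₂ hK.adj₁₃ hK.ne₂₃ (h₁₂.trans h₁₃.symm)

theorem color₁₂_ne_color₄₅ (hK : IsSubdividedK4 G v₁ v₂ v₃ v₄ v₅) (hG : IsCubic G)
    (hc : IsNormalEdgeColoring G c) : c s(v₁, v₂) ≠ c s(v₄, v₅) := by
  intro h
  have h₂₅ : c s(v₂, v₅) = c s(v₄, v₃) :=
    hc.color_eq_of_color_eq hG hK.adj₂₄ hK.adj₁₂.symm hK.adj₂₅ hK.adj₄₅ hK.adj₃₄.symm hK.ne₁₄.symm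
      hK.adj₄₅.ne hK.ne₁₅ hK.adj₂₅.ne hK.ne₂₃ hK.adj₃₅.ne' (by rwa [Sym2.eq_swap (a := v₂)])
  exact hK.color₂₅_ne_color₃₄ hG hc (by rwa [Sym2.eq_swap (a := v₃)])

theorem nodup_colors (hK : IsSubdividedK4 G v₁ v₂ v₃ v₄ v₅) (hG : IsCubic G)
    (hc : IsNormalEdgeColoring G c) :
    [c s(v₁, v₂), c s(v₁, v₃), c s(v₂, v₄), c s(v₂, v₅), c s(v₃, v₄), c s(v₃, v₅),
      c s(v₄, v₅)].Nodup := by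
  simp only [List.nodup_cons, List.mem_cons, List.not_mem_nil, or_false, not_or, not_false_eq_true,
    List.nodup_nil, and_true]
  refine ⟨⟨?_, ?_, ?_, ?_, ?_, ?_⟩, ⟨?_, ?_, ?_, ?_, ?_⟩, ⟨?_, ?_, ?_, ?_⟩, ⟨?_, ?_, ?_⟩,
    ⟨?_, ?_⟩, ?_⟩
  · exact hc.1.color_ne_left hK.adj₁₂ hK.adj₁₃ hK.ne₂₃
  · exact hc.1.color_ne_middle hK.adj₁₂ hK.adj₂₄ hK.ne₁₄
  · exact hc.1.color_ne_middle hK.adj₁₂ hK.adj₂₅ hK.ne₁₅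
  · exact hK.color₁₂_ne_color₃₄ hG hc
  · exact hK.swap₄₅.color₁₂_ne_color₃₄ hG hc
  · exact hK.color₁₂_ne_color₄₅ hG hc
  · exact hK.swap₂₃.color₁₂_ne_color₃₄ hG hc
  · exact hK.swap₂₃.swap₄₅.color₁₂_ne_color₃₄ hG hc
  · exact hc.1.color_ne_middle hK.adj₁₃ hK.adj₃₄ hK.ne₁₄
  · exact hc.1.color_ne_middle hK.adj₁₃ hK.adj₃₅ hK.ne₁₅
  · exact hK.swap₂₃.color₁₂_ne_color₄₅ hG hc
  · exact hc.1.color_ne_left hK.adj₂₄ hK.adj₂₅ hK.adj₄₅.ne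
  · exact hc.1.color_ne_right hK.adj₂₄ hK.adj₃₄ hK.ne₂₃
  · exact hK.swap₄₅.color₂₅_ne_color₃₄ hG hc
  · exact hc.1.color_ne_middle hK.adj₂₄ hK.adj₄₅ hK.adj₂₅.ne
  · exact hK.color₂₅_ne_color₃₄ hG hc
  · exact hc.1.color_ne_right hK.adj₂₅ hK.adj₃₅ hK.ne₂₃
  · exact hc.1.color_ne_right hK.adj₂₅ hK.adj₄₅ hK.adj₂₄.ne
  · exact hc.1.color_ne_left hK.adj₃₄ hK.adj₃₅ hK.adj₄₅.ne
  · exact hc.1.color_ne_middle hK.adj₃₄ hK.adj₄₅ hK.adj₃₅.ne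
  · exact hc.1.color_ne_right hK.adj₃₅ hK.adj₄₅ hK.adj₃₄.ne

theorem seven_le_card [Fintype C] (hK : IsSubdividedK4 G v₁ v₂ v₃ v₄ v₅) (hG : IsCubic G)
    (hc : IsNormalEdgeColoring G c) : 7 ≤ Fintype.card C :=
  (hK.nodup_colors hG hc).length_le_card

end IsSubdividedK4

end LowerBound

theorem stmt_16 {V : Type*} [Fintype V] (G : SimpleGraph V) (hG : IsCubic G)
    (v₁ v₂ v₃ v₄ v₅ : V) (hdist : ([v₁, v₂, v₃, v₄, v₅] : List V).Nodup)
    (h12 : G.Adj v₁ v₂) (h13 : G.Adj v₁ v₃) (h24 : G.Adj v₂ v₄) (h25 : G.Adj v₂ v₅)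
    (h34 : G.Adj v₃ v₄) (h35 : G.Adj v₃ v₅) (h45 : G.Adj v₄ v₅) :
    (∃ c : Sym2 V → Fin 7, IsNormalEdgeColoring G c) ∧
      ∀ c : Sym2 V → Fin 6, ¬ IsNormalEdgeColoring G c := by
  have hK : IsSubdividedK4 G v₁ v₂ v₃ v₄ v₅ :=
    ⟨h12, h13, h24, h25, h34, h35, h45, by grind, by grind, by grind⟩
  exact ⟨NormalColoring.exists_isNormalEdgeColoring_fin_seven hG, fun c hc =>
    absurd (hK.seven_le_card hG hc) (by simp)⟩
end

section
/- Let G10 be the simple graph on vertices v0, v1, ..., v9 with edge set {v0v1, v0v5, v0v6, v1v2, v1v5, v2v3, v2v7, v3v4, v3v9, v4v8, v4v9, v5v6, v6v7, v7v8, v8v9} (a cubic graph on 10 vertices). Then in every normal 6-edge-coloring of G10, the edge v2v7 is poor. -/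
open SimpleGraph

/-- The cubic graph on 10 vertices of Figure 5 of the paper. -/
def G10 : SimpleGraph (Fin 10) :=
  SimpleGraph.fromEdgeSet
    {s(0, 1), s(0, 5), s(0, 6), s(1, 2), s(1, 5), s(2, 3), s(2, 7), s(3, 4), s(3, 9),
      s(4, 8), s(4, 9), s(5, 6), s(6, 7), s(7, 8), s(8, 9)}

/-!
Around an edge `uv` of a properly colored cubic graph, `uv` is poor iff `S_c(u) = S_c(v)` and rich
iff `S_c(u)` and `S_c(v)` share only the color of `uv`; so in a normal coloring a second shared
color forces `uv` to be poor.

Let `abt` be a triangle and `tz` the third edge at `t`. If `ab` is poor, then `tz` has the color of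
`ab`; if `ab` is rich, then the color of `tz` avoids the five colors of `S_c(a) ∪ S_c(b)`, so with
six colors it is the remaining one. In both cases the color of `tz` is determined by `a` and `b`.
In `G10` the triangles `v0v5v1` and `v0v5v6` share the edge `v0v5`, hence `v1v2` and `v6v7` have the
same color, which is a second color shared by the endpoints of `v2v7`.
-/

theorem eq_of_notMem_of_card_le_ncard_add_one {α : Type*} [Finite α] {s : Set α} {x y : α}
    (hs : Nat.card α ≤ s.ncard + 1) (hx : x ∉ s) (hy : y ∉ s) : x = y := by
  have hcompl : sᶜ.ncard ≤ 1 := by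
    have := s.ncard_add_ncard_compl
    omega
  exact (Set.ncard_le_one (Set.toFinite _)).1 hcompl x hx y hy

section Coloring

variable {V C : Type*} {G : SimpleGraph V} {c : Sym2 V → C} {a b p q r t t' u v w z z' : V}

theorem mem_colorSet_left (h : G.Adj v w) : c s(v, w) ∈ colorSet G c v :=
  Set.mem_image_of_mem c (G.mk'_mem_incidenceSet_left_iff.2 h)

theorem mem_colorSet_right (h : G.Adj v w) : c s(v, w) ∈ colorSet G c w :=
  Set.mem_image_of_mem c (G.mk'_mem_incidenceSet_right_iff.2 h)

theorem IsRichAt.symm (h : IsRichAt G c u v) : IsRichAt G c v u := by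
  rwa [IsRichAt, Set.union_comm]

namespace IsProperEdgeColoring

theorem injOn_incidenceSet (hc : IsProperEdgeColoring G c) (v : V) :
    Set.InjOn c (G.incidenceSet v) := fun e he f hf hef ↦
  by_contra fun hne ↦ hc e he.1 f hf.1 hne ⟨v, he.2, hf.2⟩ hef

theorem ne_of_adj (hc : IsProperEdgeColoring G c) (hp : G.Adj v p) (hq : G.Adj v q)
    (hpq : p ≠ q) : c s(v, p) ≠ c s(v, q) := fun h ↦
  hpq <| Sym2.congr_right.1 <| hc.injOn_incidenceSet v
    (G.mk'_mem_incidenceSet_left_iff.2 hp) (G.mk'_mem_incidenceSet_left_iff.2 hq) h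

theorem ncard_colorSet (hc : IsProperEdgeColoring G c) (v : V) :
    (colorSet G c v).ncard = (G.neighborSet v).ncard := by
  classical
  calc (colorSet G c v).ncard = (G.incidenceSet v).ncard :=
        (hc.injOn_incidenceSet v).ncard_image
    _ = (G.neighborSet v).ncard := Nat.card_congr (G.incidenceSetEquivNeighborSet v)

theorem finite_colorSet (hc : IsProperEdgeColoring G c) (hG : IsCubic G) (v : V) :
    (colorSet G c v).Finite :=
  Set.finite_of_ncard_ne_zero (by rw [hc.ncard_colorSet, hG]; decide)

theorem colorSet_eq_of_adj (hc : IsProperEdgeColoring G c) (hG : IsCubic G) (hp : G.Adj v p)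
    (hq : G.Adj v q) (hr : G.Adj v r) (hpq : p ≠ q) (hpr : p ≠ r) (hqr : q ≠ r) :
    colorSet G c v = {c s(v, p), c s(v, q), c s(v, r)} := by
  have hcard : ({c s(v, p), c s(v, q), c s(v, r)} : Set C).ncard = 3 :=
    Set.ncard_eq_three.2 ⟨_, _, _, hc.ne_of_adj hp hq hpq, hc.ne_of_adj hp hr hpr,
      hc.ne_of_adj hq hr hqr, rfl⟩
  refine (Set.eq_of_subset_of_ncard_le ?_ ?_ (hc.finite_colorSet hG v)).symm
  · rintro _ (rfl | rfl | rfl)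
    exacts [mem_colorSet_left hp, mem_colorSet_left hq, mem_colorSet_left hr]
  · rw [hcard, hc.ncard_colorSet, hG]

theorem isPoorAt_iff_colorSet_eq (hc : IsProperEdgeColoring G c) (hG : IsCubic G) :
    IsPoorAt G c u v ↔ colorSet G c u = colorSet G c v := by
  have hcard (w : V) : (colorSet G c w).ncard = 3 := (hc.ncard_colorSet w).trans (hG w)
  refine ⟨fun hpoor ↦ ?_, fun heq ↦ by rw [IsPoorAt, heq, Set.union_self, hcard]⟩
  have hfin := (hc.finite_colorSet hG u).union (hc.finite_colorSet hG v)
  have hu := Set.eq_of_subset_of_ncard_le Set.subset_union_left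
    (hpoor.trans (hcard u).symm).le hfin
  have hv := Set.eq_of_subset_of_ncard_le Set.subset_union_right
    (hpoor.trans (hcard v).symm).le hfin
  exact hu.trans hv.symm

theorem inter_colorSet_eq_singleton (hc : IsProperEdgeColoring G c) (hG : IsCubic G)
    (huv : G.Adj u v) (hrich : IsRichAt G c u v) :
    colorSet G c u ∩ colorSet G c v = {c s(u, v)} := by
  have hinter : (colorSet G c u ∩ colorSet G c v).ncard = 1 := by
    have := Set.ncard_union_add_ncard_inter _ _ (hc.finite_colorSet hG u)
      (hc.finite_colorSet hG v)
    rw [hc.ncard_colorSet, hc.ncard_colorSet, hG, hG, hrich] at this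
    omega
  obtain ⟨k, hk⟩ := Set.ncard_eq_one.1 hinter
  have huv_mem : c s(u, v) ∈ colorSet G c u ∩ colorSet G c v :=
    ⟨mem_colorSet_left huv, mem_colorSet_right huv⟩
  rw [hk, Set.mem_singleton_iff] at huv_mem
  rw [hk, huv_mem]

end IsProperEdgeColoring

theorem IsNormalEdgeColoring.isPoorAt_of_mem_colorSet (hc : IsNormalEdgeColoring G c)
    (hG : IsCubic G) (huv : G.Adj u v) {k : C} (hu : k ∈ colorSet G c u)
    (hv : k ∈ colorSet G c v) (hk : k ≠ c s(u, v)) : IsPoorAt G c u v :=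
  (hc.2 u v huv).resolve_right fun hrich ↦
    hk ((hc.1.inter_colorSet_eq_singleton hG huv hrich).subset ⟨hu, hv⟩)

/-- `a`, `b`, `t` form a triangle and `tz` is an edge leaving it at `t`. Two stemmed triangles on
the same edge `ab` form a diamond together with the two edges attaching it to the rest of a cubic
graph. -/
structure IsStemmedTriangle (G : SimpleGraph V) (a b t z : V) : Prop where
  adj_base : G.Adj a b
  adj_left : G.Adj t a
  adj_right : G.Adj t b
  adj_stem : G.Adj t z
  stem_ne_left : z ≠ a
  stem_ne_right : z ≠ b

namespace IsStemmedTriangle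

theorem symm (h : IsStemmedTriangle G a b t z) : IsStemmedTriangle G b a t z :=
  ⟨h.adj_base.symm, h.adj_right, h.adj_left, h.adj_stem, h.stem_ne_right, h.stem_ne_left⟩

theorem color_stem_eq_of_isPoorAt (h : IsStemmedTriangle G a b t z)
    (hc : IsNormalEdgeColoring G c) (hG : IsCubic G) (hpoor : IsPoorAt G c a b) :
    c s(t, z) = c s(a, b) := by
  have hab : colorSet G c a = colorSet G c b := (hc.1.isPoorAt_iff_colorSet_eq hG).1 hpoor
  have hta : colorSet G c t = colorSet G c a :=
    (hc.1.isPoorAt_iff_colorSet_eq hG).1 <|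
      hc.isPoorAt_of_mem_colorSet hG h.adj_left (mem_colorSet_left h.adj_right)
        (hab ▸ mem_colorSet_right h.adj_right)
        (hc.1.ne_of_adj h.adj_right h.adj_left h.adj_base.ne')
  have hmem : c s(a, b) ∈ ({c s(t, a), c s(t, b), c s(t, z)} : Set C) := by
    rw [← hc.1.colorSet_eq_of_adj hG h.adj_left h.adj_right h.adj_stem h.adj_base.ne
      h.stem_ne_left.symm h.stem_ne_right.symm, hta]
    exact mem_colorSet_left h.adj_base
  have hne_left : c s(a, b) ≠ c s(t, a) := by
    rw [Sym2.eq_swap (a := t)]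
    exact hc.1.ne_of_adj h.adj_base h.adj_left.symm h.adj_right.ne'
  have hne_right : c s(a, b) ≠ c s(t, b) := by
    rw [Sym2.eq_swap (a := a), Sym2.eq_swap (a := t)]
    exact hc.1.ne_of_adj h.adj_base.symm h.adj_right.symm h.adj_left.ne'
  exact ((hmem.resolve_left hne_left).resolve_left hne_right).symm

theorem color_stem_notMem_colorSet_left (h : IsStemmedTriangle G a b t z)
    (hc : IsNormalEdgeColoring G c) (hG : IsCubic G) (hrich : IsRichAt G c a b) :
    c s(t, z) ∉ colorSet G c a := by
  intro hmem
  have hta : colorSet G c t = colorSet G c a :=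
    (hc.1.isPoorAt_iff_colorSet_eq hG).1 <|
      hc.isPoorAt_of_mem_colorSet hG h.adj_left (mem_colorSet_left h.adj_stem) hmem
        (hc.1.ne_of_adj h.adj_stem h.adj_left h.stem_ne_left)
  have htb : c s(t, b) = c s(a, b) :=
    (hc.1.inter_colorSet_eq_singleton hG h.adj_base hrich).subset
      ⟨hta ▸ mem_colorSet_left h.adj_right, mem_colorSet_right h.adj_right⟩
  rw [Sym2.eq_swap (a := t), Sym2.eq_swap (a := a)] at htb
  exact hc.1.ne_of_adj h.adj_right.symm h.adj_base.symm h.adj_left.ne htb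

theorem color_stem_notMem_union_colorSet (h : IsStemmedTriangle G a b t z)
    (hc : IsNormalEdgeColoring G c) (hG : IsCubic G) (hrich : IsRichAt G c a b) :
    c s(t, z) ∉ colorSet G c a ∪ colorSet G c b := by
  rintro (ha | hb)
  · exact h.color_stem_notMem_colorSet_left hc hG hrich ha
  · exact h.symm.color_stem_notMem_colorSet_left hc hG hrich.symm hb

theorem color_stem_eq_color_stem [Finite C] (h : IsStemmedTriangle G a b t z)
    (h' : IsStemmedTriangle G a b t' z') (hc : IsNormalEdgeColoring G c) (hG : IsCubic G)
    (hC : Nat.card C ≤ 6) : c s(t, z) = c s(t', z') := by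
  rcases hc.2 a b h.adj_base with hpoor | hrich
  · rw [h.color_stem_eq_of_isPoorAt hc hG hpoor, h'.color_stem_eq_of_isPoorAt hc hG hpoor]
  · exact eq_of_notMem_of_card_le_ncard_add_one (by rwa [hrich])
      (h.color_stem_notMem_union_colorSet hc hG hrich)
      (h'.color_stem_notMem_union_colorSet hc hG hrich)

end IsStemmedTriangle

theorem stmt_18_general [Finite C] (hC : Nat.card C ≤ 6) (hG : IsCubic G)
    (hc : IsNormalEdgeColoring G c) (h : IsStemmedTriangle G a b t z)
    (h' : IsStemmedTriangle G a b t' z') (hzz' : G.Adj z z') (htz' : t ≠ z') :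
    IsPoorAt G c z z' := by
  have hstem : c s(t, z) = c s(t', z') := h.color_stem_eq_color_stem h' hc hG hC
  have hne : c s(t, z) ≠ c s(z, z') := by
    rw [Sym2.eq_swap]
    exact hc.1.ne_of_adj h.adj_stem.symm hzz' htz'
  exact hc.isPoorAt_of_mem_colorSet hG hzz' (mem_colorSet_right h.adj_stem)
    (hstem ▸ mem_colorSet_right h'.adj_stem) hne

end Coloring

instance : DecidableRel G10.Adj :=
  inferInstanceAs (DecidableRel (fromEdgeSet _).Adj)

theorem isCubic_G10 : IsCubic G10 := by
  intro v
  rw [Set.ncard_eq_toFinset_card']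
  revert v
  decide

theorem isStemmedTriangle_G10_one : IsStemmedTriangle G10 0 5 1 2 := by
  constructor <;> decide

theorem isStemmedTriangle_G10_six : IsStemmedTriangle G10 0 5 6 7 := by
  constructor <;> decide

theorem stmt_18 (c : Sym2 (Fin 10) → Fin 6) (hc : IsNormalEdgeColoring G10 c) :
    IsPoorAt G10 c 2 7 :=
  stmt_18_general (by simp) isCubic_G10 hc isStemmedTriangle_G10_one isStemmedTriangle_G10_six
    (by decide) (by decide)
end

section
/- Let G10 be the simple graph on vertices v0, v1, ..., v9 with edge set {v0v1, v0v5, v0v6, v1v2, v1v5, v2v3, v2v7, v3v4, v3v9, v4v8, v4v9, v5v6, v6v7, v7v8, v8v9} (a cubic graph on 10 vertices). Then for every nowhere-zero Z_2^3-flow θ on G10, the edge v2v7 is poor with respect to θ. -/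
open SimpleGraph

/-!
In characteristic two, summing the conservation law over the vertices of a finite set `S` cancels
every edge inside `S`, so the values of a flow on the edge cut of `S` sum to zero and a 2-edge-cut
carries a single value. In `G10` the sets `{0, 1, 5, 6}` and `{3, 4, 8, 9}` have the 2-edge-cuts
`{12, 67}` and `{23, 78}`. Hence the vertices 2 and 7 see the same colors, and there are exactly
three of them because a nowhere-zero flow is injective on the edges at a vertex of degree three.
-/

/-- The edge cut of a vertex set `S`: the edges of `G` with one end in `S` and the other outside.
The ends are quantified over the members of the unordered pair `e`, so that membership can be
decided for a concrete finite graph. -/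
def edgeCut {V : Type*} (G : SimpleGraph V) (S : Set V) : Set (Sym2 V) :=
  {e | e ∈ G.edgeSet ∧ (∃ u ∈ e, u ∈ S) ∧ ∃ w ∈ e, w ∉ S}

theorem mem_edgeCut {V : Type*} {G : SimpleGraph V} {S : Set V} {e : Sym2 V} :
    e ∈ edgeCut G S ↔ e ∈ G.edgeSet ∧ (∃ u ∈ e, u ∈ S) ∧ ∃ w ∈ e, w ∉ S :=
  Iff.rfl

section ElementaryTwoGroup

variable {V M : Type*} [AddCommGroup M] [Module (ZMod 2) M] {G : SimpleGraph V} {θ : Sym2 V → M}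

open Classical in
theorem sum_ends_mem_eq_ite_edgeCut (S : Finset V) {e : Sym2 V} (he : e ∈ G.edgeSet) (x : M) :
    ∑ v ∈ S with v ∈ e, x = if e ∈ edgeCut G S then x else 0 := by
  induction e with | h u w =>
  have hne : u ≠ w := G.ne_of_adj he
  have hends : S.filter (· ∈ s(u, w)) = ({u, w} : Finset V).filter (· ∈ S) := by
    ext v
    simp only [Finset.mem_filter, Sym2.mem_iff, Finset.mem_insert, Finset.mem_singleton, and_comm]
  have hcut : s(u, w) ∈ edgeCut G S ↔ (u ∈ S ∧ w ∉ S) ∨ (u ∉ S ∧ w ∈ S) := by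
    simp only [mem_edgeCut, he, Sym2.mem_iff, Finset.mem_coe]
    grind
  rw [hends, Finset.sum_filter, Finset.sum_pair hne]
  by_cases hu : u ∈ S <;> by_cases hw : w ∈ S <;> simp [hcut, hu, hw, ZModModule.add_self]

theorem finsum_edgeCut_eq_zero (S : Finset V) (hfin : ∀ v ∈ S, (G.incidenceSet v).Finite)
    (hflow : ∀ v ∈ S, ∑ᶠ e ∈ G.incidenceSet v, θ e = 0) :
    ∑ᶠ e ∈ edgeCut G S, θ e = 0 := by
  classical
  have hEfin : (⋃ v ∈ S, G.incidenceSet v).Finite := S.finite_toSet.biUnion hfin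
  obtain ⟨E, hE⟩ := hEfin.exists_finset
  have mem_E {e : Sym2 V} : e ∈ E ↔ e ∈ G.edgeSet ∧ ∃ v ∈ S, v ∈ e := by
    simp only [hE, Set.mem_iUnion, incidenceSet, Set.mem_ofPred_eq, exists_prop]
    tauto
  have hcut : edgeCut G S = ↑(E.filter (· ∈ edgeCut G S)) := by
    ext e
    simp only [Finset.coe_filter, mem_E, mem_edgeCut, Finset.mem_coe]
    grind
  have hstar (v : V) (hv : v ∈ S) : G.incidenceSet v = ↑(E.filter (v ∈ ·)) := by
    ext e
    simp only [Finset.coe_filter, mem_E, incidenceSet, Set.mem_ofPred_eq]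
    grind
  calc ∑ᶠ e ∈ edgeCut G S, θ e
      = ∑ e ∈ E, if e ∈ edgeCut G S then θ e else 0 := by
        rw [hcut, finsum_mem_coe_finset, Finset.sum_filter, ← hcut]
    _ = ∑ e ∈ E, ∑ v ∈ S with v ∈ e, θ e :=
        Finset.sum_congr rfl fun e he ↦ (sum_ends_mem_eq_ite_edgeCut S (mem_E.mp he).1 (θ e)).symm
    _ = ∑ v ∈ S, ∑ e ∈ E with v ∈ e, θ e :=
        Finset.sum_comm' fun e v ↦ by simp only [Finset.mem_filter]; tauto
    _ = 0 := Finset.sum_eq_zero fun v hv ↦ by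
        rw [← finsum_mem_coe_finset, ← hstar v hv, hflow v hv]

theorem eq_of_edgeCut_eq_pair (S : Finset V) (hfin : ∀ v ∈ S, (G.incidenceSet v).Finite)
    (hflow : ∀ v ∈ S, ∑ᶠ e ∈ G.incidenceSet v, θ e = 0) {e f : Sym2 V}
    (hcut : edgeCut G S = {e, f}) : θ e = θ f := by
  obtain rfl | hef := eq_or_ne e f
  · rfl
  · rw [← sub_eq_zero, ZModModule.sub_eq_add, ← finsum_mem_pair hef, ← hcut]
    exact finsum_edgeCut_eq_zero S hfin hflow

theorem IsNowhereZeroFlow.injOn_incidenceSet (hθ : IsNowhereZeroFlow G θ) {v : V}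
    (hdeg : (G.incidenceSet v).ncard = 3) : Set.InjOn θ (G.incidenceSet v) := by
  intro e he f hf hval
  by_contra hef
  obtain ⟨g, hg⟩ : ∃ g, G.incidenceSet v \ {e, f} = {g} := by
    rw [← Set.ncard_eq_one, Set.ncard_sdiff (Set.pair_subset he hf), hdeg, Set.ncard_pair hef]
  have hgmem : g ∈ G.incidenceSet v \ {e, f} := hg ▸ Set.mem_singleton g
  have hsum : θ e + θ f + θ g = 0 := by
    rw [← hθ.2 v, ← Set.union_sdiff_cancel (Set.pair_subset he hf), hg,
      finsum_mem_union (Set.disjoint_singleton_right.mpr hgmem.2) (Set.toFinite _) (Set.toFinite _),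
      finsum_mem_pair hef, finsum_mem_singleton]
  rw [hval, ZModModule.add_self, zero_add] at hsum
  exact hθ.1 g hgmem.1.1 hsum

theorem IsNowhereZeroFlow.isPoorAt_of_colorSet_eq (hθ : IsNowhereZeroFlow G θ) {u v : V}
    (hdeg : (G.incidenceSet u).ncard = 3) (hcolor : colorSet G θ u = colorSet G θ v) :
    IsPoorAt G θ u v := by
  rw [IsPoorAt, ← hcolor, Set.union_self, colorSet, (hθ.injOn_incidenceSet hdeg).ncard_image, hdeg]

end ElementaryTwoGroup

instance inst_s19 : DecidableRel G10.Adj :=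
  inferInstanceAs (DecidableRel (SimpleGraph.fromEdgeSet _).Adj)

theorem incidenceSet_G10_two : G10.incidenceSet 2 = {s(1, 2), s(2, 3), s(2, 7)} :=
  Set.ext (by decide)

theorem incidenceSet_G10_seven : G10.incidenceSet 7 = {s(6, 7), s(7, 8), s(2, 7)} :=
  Set.ext (by decide)

theorem edgeCut_G10_0156 :
    edgeCut G10 ({0, 1, 5, 6} : Finset (Fin 10)) = {s(1, 2), s(6, 7)} :=
  Set.ext (by simp only [mem_edgeCut, Finset.mem_coe]; decide)

theorem edgeCut_G10_3489 :
    edgeCut G10 ({3, 4, 8, 9} : Finset (Fin 10)) = {s(2, 3), s(7, 8)} :=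
  Set.ext (by simp only [mem_edgeCut, Finset.mem_coe]; decide)

theorem stmt_19_general {M : Type*} [AddCommGroup M] [Module (ZMod 2) M]
    (θ : Sym2 (Fin 10) → M) (hθ : IsNowhereZeroFlow G10 θ) :
    IsPoorAt G10 θ 2 7 := by
  have hcut_left : θ s(1, 2) = θ s(6, 7) :=
    eq_of_edgeCut_eq_pair _ (fun _ _ ↦ Set.toFinite _) (fun v _ ↦ hθ.2 v) edgeCut_G10_0156
  have hcut_right : θ s(2, 3) = θ s(7, 8) :=
    eq_of_edgeCut_eq_pair _ (fun _ _ ↦ Set.toFinite _) (fun v _ ↦ hθ.2 v) edgeCut_G10_3489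
  have hdeg : (G10.incidenceSet 2).ncard = 3 :=
    Set.ncard_eq_three.mpr ⟨_, _, _, by decide, by decide, by decide, incidenceSet_G10_two⟩
  refine hθ.isPoorAt_of_colorSet_eq hdeg ?_
  simp only [colorSet, incidenceSet_G10_two, incidenceSet_G10_seven, Set.image_insert_eq,
    Set.image_singleton, hcut_left, hcut_right]

theorem stmt_19 (θ : Sym2 (Fin 10) → ZMod 2 × ZMod 2 × ZMod 2)
    (hθ : IsNowhereZeroFlow G10 θ) :
    IsPoorAt G10 θ 2 7 :=
  stmt_19_general θ hθ
end
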